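/- arXiv:1303.2453 — 2 statements merged into one kernel-verified Lean document; each statement's English description precedes it below -/
import Mathlib

section
/- For every level-2 collapsible pushdown system S=(Q,Σ,Γ,Δ,q₀) there is a deterministic finite automaton with output with at most 2^{|Q|²}·2^{|Q|²}·|Σ|²·2 states which, reading the word w↓₀ for any word w occurring as the topmost word of some stack in Stacks(Σ), outputs ExRet(w), ExLoop(w), ExHLoop(w), ExLLoop(w), ExOneLoop(w), Sym(w) and Lvl(w). -/
namespace CPG

/-! ## Level-2 collapsible pushdown stacks -/

/-- Stack letters: `Sum.inl σ` is a letter with a level-1 link,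
`Sum.inr (σ, k)` is a letter with a level-2 link to the substack of width `k`. -/
abbrev Letter (A : Type) := A ⊕ (A × ℕ)

def symOf {A : Type} : Letter A → A
  | Sum.inl a => a
  | Sum.inr (a, _) => a

def lvlOf {A : Type} : Letter A → ℕ
  | Sum.inl _ => 1
  | Sum.inr _ => 2

abbrev Word (A : Type) := List (Letter A)

/-- A 2-word: a list of words; the last word is the topmost one. -/
abbrev Stack2 (A : Type) := List (Word A)

/-- The initial level-2 stack `⊥₂`. -/
def bottom2 {A : Type} (bot : A) : Stack2 A := [[Sum.inl bot]]

def top2 {A : Type} (s : Stack2 A) : Option (Word A) := s.getLast?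

def top1 {A : Type} (s : Stack2 A) : Option (Letter A) := s.getLast?.bind List.getLast?

def symS {A : Type} (s : Stack2 A) : Option A := (top1 s).map symOf

def lvlS {A : Type} (s : Stack2 A) : Option ℕ := (top1 s).map lvlOf

def lnkS {A : Type} (s : Stack2 A) : Option ℕ :=
  match top1 s, top2 s with
  | some (Sum.inr (_, j)), _ => some j
  | some (Sum.inl _), some w => some (w.length - 1)
  | _, _ => none

def clone2 {A : Type} (s : Stack2 A) : Option (Stack2 A) :=
  (top2 s).map fun w => s ++ [w]

def push1 {A : Type} [DecidableEq A] (bot a : A) (s : Stack2 A) : Option (Stack2 A) :=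
  if a = bot then none else (top2 s).map fun w => s.dropLast ++ [w ++ [Sum.inl a]]

def push2 {A : Type} [DecidableEq A] (bot a : A) (s : Stack2 A) : Option (Stack2 A) :=
  if a = bot then none else
    (top2 s).map fun w => s.dropLast ++ [w ++ [Sum.inr (a, s.length - 1)]]

def pop2 {A : Type} (s : Stack2 A) : Option (Stack2 A) :=
  if 1 < s.length then some s.dropLast else none

def pop1 {A : Type} (s : Stack2 A) : Option (Stack2 A) :=
  match s.getLast? with
  | some w => if 1 < w.length then some (s.dropLast ++ [w.dropLast]) else none
  | none => none

def collapse {A : Type} (s : Stack2 A) : Option (Stack2 A) :=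
  match top1 s with
  | some (Sum.inr (_, k)) => if 0 < k then some (s.take k) else none
  | some (Sum.inl _) => pop1 s
  | none => none

/-- The level-2 stack operations. -/
inductive Op (A : Type) where
  | clone2 | pop1 | pop2 | collapse
  | push1 (a : A) | push2 (a : A)

def applyOp {A : Type} [DecidableEq A] (bot : A) : Op A → Stack2 A → Option (Stack2 A)
  | .clone2 => clone2
  | .pop1 => pop1
  | .pop2 => pop2
  | .collapse => collapse
  | .push1 a => push1 bot a
  | .push2 a => push2 bot a

/-- `Stacks(Σ)` : the smallest set containing `⊥₂` and closed under the operations. -/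
inductive IsStack {A : Type} [DecidableEq A] (bot : A) : Stack2 A → Prop where
  | base : IsStack bot (bottom2 bot)
  | step {s t : Stack2 A} (op : Op A) : IsStack bot s → applyOp bot op s = some t →
      IsStack bot t

/-- Iterated application of a partial stack operation. -/
def iter {A : Type} (f : Stack2 A → Option (Stack2 A)) : ℕ → Stack2 A → Option (Stack2 A)
  | 0, s => some s
  | n + 1, s => (f s).bind (iter f n)

/-- `t` is a substack of `s`: `t = Pop₁ⁿ(Pop₂ᵐ(s))`. -/
def Substack {A : Type} (t s : Stack2 A) : Prop :=
  ∃ n m, (iter pop2 m s).bind (iter pop1 n) = some t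

def ProperSubstack {A : Type} (t s : Stack2 A) : Prop := Substack t s ∧ t ≠ s

/-- `s` is a prefix of `t` (`s ⊑ t`). -/
def StackPrefix {A : Type} (s t : Stack2 A) : Prop :=
  s ≠ [] ∧ s.length ≤ t.length ∧ s.dropLast <+: t ∧
    ∀ j, s.length - 1 ≤ j → j < t.length → s.getLastD [] <+: t.getD j []

/-- `t[s/u]` : the stack obtained from `t` by replacing the prefix `s` by `u`. -/
def substPrefix {A : Type} (t s u : Stack2 A) : Stack2 A :=
  u.dropLast ++
    (t.drop (s.length - 1)).map fun v => u.getLastD [] ++ v.drop (s.getLastD []).length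

/-! ## Collapsible pushdown systems and runs -/

/-- A level-2 collapsible pushdown system. -/
structure CPS (Q A Γ : Type) where
  bot : A
  q0 : Q
  Δ : Set (Q × A × Γ × Q × Op A)

variable {Q A Γ : Type} [DecidableEq A]

/-- A `γ`-labelled transition realized by the operation `op`. -/
def TransOp (S : CPS Q A Γ) (γ : Γ) (op : Op A) (c c' : Q × Stack2 A) : Prop :=
  ∃ σ : A, symS c.2 = some σ ∧ (c.1, σ, γ, c'.1, op) ∈ S.Δ ∧
    applyOp S.bot op c.2 = some c'.2

def Trans (S : CPS Q A Γ) (γ : Γ) (c c' : Q × Stack2 A) : Prop :=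
  ∃ op, TransOp S γ op c c'

/-- A run of a collapsible pushdown system (recording configurations, labels and
operations of each step). -/
structure Run (S : CPS Q A Γ) where
  len : ℕ
  cfg : ℕ → Q × Stack2 A
  lab : ℕ → Γ
  op : ℕ → Op A
  ok : ∀ i, i < len → TransOp S (lab i) (op i) (cfg i) (cfg (i + 1))

def Run.stk {S : CPS Q A Γ} (ρ : Run S) (i : ℕ) : Stack2 A := (ρ.cfg i).2

/-- The word of labels along a run. -/
def Run.labels {S : CPS Q A Γ} (ρ : Run S) : List Γ :=
  List.ofFn fun i : Fin ρ.len => ρ.lab i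

/-- `Reach_L`-reachability: a run from `c` to `c'` labelled by a word in `L`. -/
def ReachL (S : CPS Q A Γ) (L : Language Γ) (c c' : Q × Stack2 A) : Prop :=
  ∃ ρ : Run S, ρ.cfg 0 = c ∧ ρ.cfg ρ.len = c' ∧ ρ.labels ∈ L

/-- Plain reachability. -/
def Reach (S : CPS Q A Γ) (c c' : Q × Stack2 A) : Prop :=
  ∃ ρ : Run S, ρ.cfg 0 = c ∧ ρ.cfg ρ.len = c'

/-! ## ε-contraction -/

def oneLetterLang (γ : Γ) : Language Γ := {[γ]}

def nonEpsLang (eps : Γ) : Language Γ := {w | ∃ γ : Γ, γ ≠ eps ∧ w = [γ]}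

/-- The language `{ε}*`. -/
def epsStar (eps : Γ) : Language Γ := KStar.kstar (oneLetterLang eps)

/-- The language `({ε}*(Γ∖{ε}))*`. -/
def domLang (eps : Γ) : Language Γ :=
  KStar.kstar (epsStar eps * nonEpsLang eps)

/-- The language `{ε}*γ`. -/
def edgeLang (eps γ : Γ) : Language Γ := epsStar eps * oneLetterLang γ

/-- The vertex set of the ε-contraction `G/ε`. -/
def EpsDomain (S : CPS Q A Γ) (eps : Γ) : Set (Q × Stack2 A) :=
  {c | ReachL S (domLang eps) (S.q0, bottom2 S.bot) c}

/-! ## (Generalised) milestones and the order ≪ -/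

/-- `wordAt bot s i` is the word `wᵢ` of `s`, with the convention `w₀ = ⊥`. -/
def wordAt {A : Type} (bot : A) (s : Stack2 A) (i : ℕ) : Word A :=
  if i = 0 then [Sum.inl bot] else s.getD (i - 1) []

/-- Longest common prefix of two words. -/
def lcp {α : Type} [DecidableEq α] : List α → List α → List α
  | a :: s, b :: t => if a = b then a :: lcp s t else []
  | _, _ => []

/-- `m` is a generalised milestone of `s`. -/
def GenMilestone (bot : A) (s m : Stack2 A) : Prop :=
  ∃ i v, i < s.length ∧ m = s.take i ++ [v] ∧
    lcp (wordAt bot s i) (wordAt bot s (i + 1)) <+: v ∧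
    (v <+: wordAt bot s i ∨ v <+: wordAt bot s (i + 1))

/-- `m` is a milestone of `s`. -/
def Milestone (bot : A) (s m : Stack2 A) : Prop :=
  ∃ i v, i < s.length ∧ m = s.take i ++ [v] ∧
    lcp (wordAt bot s i) (wordAt bot s (i + 1)) <+: v ∧
    v <+: wordAt bot s (i + 1)

def genMilestones (bot : A) (s : Stack2 A) : Set (Stack2 A) := {m | GenMilestone bot s m}

def milestones (bot : A) (s : Stack2 A) : Set (Stack2 A) := {m | Milestone bot s m}

/-- The base cases of the partial order `≪`. -/
def llBase (bot : A) (s t : Stack2 A) : Prop :=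
  s.length < t.length ∨
    (s ≠ [] ∧ s.length = t.length ∧ s.dropLast = t.dropLast ∧
      ((t.getLastD [] <+: s.getLastD [] ∧ t.getLastD [] ≠ s.getLastD [] ∧
          s.getLastD [] <+: wordAt bot s (s.length - 1)) ∨
        (s.getLastD [] <+: t.getLastD [] ∧ s.getLastD [] ≠ t.getLastD [] ∧
          ¬ t.getLastD [] <+: wordAt bot s (s.length - 1))))

/-- The order `≪`: the smallest reflexive transitive relation containing `llBase`. -/
def ll (bot : A) : Stack2 A → Stack2 A → Prop := Relation.ReflTransGen (llBase bot)

/-- `m'` is the ≪-successor of `m` within `genMilestones bot s`. -/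
def LlSuccessor (bot : A) (s m m' : Stack2 A) : Prop :=
  GenMilestone bot s m ∧ GenMilestone bot s m' ∧ m ≠ m' ∧ ll bot m m' ∧
    ∀ m'', GenMilestone bot s m'' → ll bot m m'' → m'' ≠ m → ll bot m' m''

/-! ## Loops, returns and 1-loops -/

/-- The segment `[i,j]` of `ρ` is a loop (of its initial stack). -/
def LoopSeg {S : CPS Q A Γ} (ρ : Run S) (i j : ℕ) : Prop :=
  i ≤ j ∧ j ≤ ρ.len ∧ ρ.stk j = ρ.stk i ∧
    (∀ k, i ≤ k → k ≤ j → ∀ t, pop2 (ρ.stk i) = some t → ¬ Substack (ρ.stk k) t) ∧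
    (∀ k, i ≤ k → k ≤ j → ∀ m, 0 < m → ∀ t, iter pop1 m (ρ.stk i) = some t →
      ρ.stk k = t → ∀ m', m' < m → ∃ t', iter pop1 m' (ρ.stk i) = some t' ∧
        lvlS t' = some 1)

/-- A high loop: a loop that never visits `Pop₁` of its stack. -/
def HighLoopSeg {S : CPS Q A Γ} (ρ : Run S) (i j : ℕ) : Prop :=
  LoopSeg ρ i j ∧ ∀ k, i ≤ k → k ≤ j → ∀ t, pop1 (ρ.stk i) = some t → ρ.stk k ≠ t

/-- A low loop: a loop whose second and second-to-last stacks are `Pop₁` of its stack. -/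
def LowLoopSeg {S : CPS Q A Γ} (ρ : Run S) (i j : ℕ) : Prop :=
  LoopSeg ρ i j ∧ i < j ∧
    ∃ t, pop1 (ρ.stk i) = some t ∧ ρ.stk (i + 1) = t ∧ ρ.stk (j - 1) = t

/-- The common part of the definition of a return on the segment `[i,j]`:
it leads from its initial stack `t` to `Pop₂(t)` and never visits a substack
of `Pop₂(t)` before its final configuration. -/
def RetShell {S : CPS Q A Γ} (ρ : Run S) (i j : ℕ) : Prop :=
  i < j ∧ j ≤ ρ.len ∧ pop2 (ρ.stk i) = some (ρ.stk j) ∧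
    ∀ k, i ≤ k → k < j → ¬ Substack (ρ.stk k) (ρ.stk j)

/-- The segment `[i,j]` of `ρ` is a return (from its initial stack `t` to `Pop₂(t)`). -/
inductive RetSeg {S : CPS Q A Γ} (ρ : Run S) : ℕ → ℕ → Prop where
  | pop2 {i j : ℕ} (h : RetShell ρ i j) (hop : ρ.op (j - 1) = Op.pop2) : RetSeg ρ i j
  | collapse {i j : ℕ} (h : RetShell ρ i j) (hop : ρ.op (j - 1) = Op.collapse)
      (hpre : ∃ w w', top2 (ρ.stk i) = some w ∧ top2 (ρ.stk (j - 1)) = some w' ∧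
        w <+: w' ∧ w ≠ w') : RetSeg ρ i j
  | sub {i k j : ℕ} (h : RetShell ρ i j) (hik : i < k) (hkj : k ≤ j)
      (hpop : pop1 (ρ.stk i) = some (ρ.stk k)) (hret : RetSeg ρ k j) : RetSeg ρ i j

/-- The segment `[i,j]` of `ρ` is a level-1-loop. -/
def OneLoopSeg {S : CPS Q A Γ} (ρ : Run S) (i j : ℕ) : Prop :=
  i ≤ j ∧ j ≤ ρ.len ∧
    ∃ (s : Stack2 A) (w : Word A) (s' : Stack2 A),
      ρ.stk i = s ++ [w] ∧ ρ.stk j = s ++ s' ++ [w] ∧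
      (∀ k, i ≤ k → k ≤ j → s.length < (ρ.stk k).length) ∧
      (∀ k, i ≤ k → k ≤ j → 1 < w.length → top2 (ρ.stk k) = some w.dropLast →
        ∃ m, k < m ∧ m ≤ j ∧ RetSeg ρ k m)

/-! ## ExRet, ExLoop, ... -/

/-- `w↓₀` : replace every level-2 link by `0`. -/
def down0 {A : Type} : Word A → Word A :=
  List.map fun a => match a with
    | Sum.inl x => Sum.inl x
    | Sum.inr (x, _) => Sum.inr (x, 0)

def ExRet (S : CPS Q A Γ) (w : Word A) : Set (Q × Q) :=
  {p | ∃ ρ : Run S, ρ.cfg 0 = (p.1, [down0 w, down0 w]) ∧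
    ρ.cfg ρ.len = (p.2, [down0 w]) ∧ RetSeg ρ 0 ρ.len}

def ExLoop (S : CPS Q A Γ) (w : Word A) : Set (Q × Q) :=
  {p | ∃ ρ : Run S, ρ.cfg 0 = (p.1, [down0 w]) ∧ ρ.cfg ρ.len = (p.2, [down0 w]) ∧
    LoopSeg ρ 0 ρ.len}

def ExHLoop (S : CPS Q A Γ) (w : Word A) : Set (Q × Q) :=
  {p | ∃ ρ : Run S, ρ.cfg 0 = (p.1, [down0 w]) ∧ ρ.cfg ρ.len = (p.2, [down0 w]) ∧
    HighLoopSeg ρ 0 ρ.len}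

def ExLLoop (S : CPS Q A Γ) (w : Word A) : Set (Q × Q) :=
  {p | ∃ ρ : Run S, ρ.cfg 0 = (p.1, [down0 w]) ∧ ρ.cfg ρ.len = (p.2, [down0 w]) ∧
    LowLoopSeg ρ 0 ρ.len}

def ExOneLoop (S : CPS Q A Γ) (w : Word A) : Set (Q × Q) :=
  {p | ∃ (ρ : Run S) (s' : Stack2 A), ρ.cfg 0 = (p.1, [down0 w]) ∧
    ρ.cfg ρ.len = (p.2, s' ++ [down0 w]) ∧ OneLoopSeg ρ 0 ρ.len}

/-! ## Finite binary trees -/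

/-- Finite binary trees with labels in `α` and optional left/right children. -/
inductive PTree (α : Type) where
  | node (a : α) (l r : Option (PTree α)) : PTree α

/-- The label of the node at address `d` (`false` = left/0, `true` = right/1). -/
def PTree.labelAt {α : Type} : PTree α → List Bool → Option α
  | .node a _ _, [] => some a
  | .node _ (some t) _, false :: d => t.labelAt d
  | .node _ none _, false :: _ => none
  | .node _ _ (some t), true :: d => t.labelAt d
  | .node _ _ none, true :: _ => none

def PTree.map {α β : Type} (f : α → β) : PTree α → PTree β
  | .node a l r =>
    .node (f a)
      (match l with | none => none | some t => some (t.map f))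
      (match r with | none => none | some t => some (t.map f))

/-- Convolution of two trees, with `none` as padding symbol `□`. -/
def PTree.conv {α β : Type} : PTree α → PTree β → PTree (Option α × Option β)
  | .node a l r, .node b l' r' =>
    .node (some a, some b)
      (match l, l' with
        | none, none => none
        | some t, none => some (t.map fun x => (some x, none))
        | none, some u => some (u.map fun x => (none, some x))
        | some t, some u => some (PTree.conv t u))
      (match r, r' with
        | none, none => none
        | some t, none => some (t.map fun x => (some x, none))
        | none, some u => some (u.map fun x => (none, some x))
        | some t, some u => some (PTree.conv t u))

/-- A (bottom-up nondeterministic) finite tree automaton. -/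
structure TreeAut (α : Type) where
  St : Type
  fin : Finite St
  qI : St
  F : Set St
  Δ : Set (St × α × St × St)

/-- Acceptance of a finite tree by a tree automaton. -/
def TreeAut.Accepts {α : Type} (M : TreeAut α) (t : PTree α) : Prop :=
  ∃ ρ : List Bool → M.St,
    (∀ d, t.labelAt d = none → ρ d = M.qI) ∧
    (∀ d a, t.labelAt d = some a → (ρ d, a, ρ (d ++ [false]), ρ (d ++ [true])) ∈ M.Δ) ∧
    ρ [] ∈ M.F

/-- A family of binary relations on `B` is tree-automatic. -/
def IsTreeAutomatic {B : Type} {I : Type} (E : I → B → B → Prop) : Prop :=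
  ∃ (α : Type) (_ : Finite α) (AB : TreeAut α) (AE : I → TreeAut (Option α × Option α))
    (f : {t : PTree α // AB.Accepts t} → B),
    Function.Bijective f ∧
      ∀ (i : I) (t₁ t₂ : {t : PTree α // AB.Accepts t}),
        (AE i).Accepts (PTree.conv t₁.1 t₂.1) ↔ E i (f t₁) (f t₂)

/-! ## The encoding of configurations as trees -/

/-- Labels of encoding trees: a state, a pair (symbol, link level), or `ε`. -/
abbrev EncLabel (Q A : Type) := Q ⊕ ((A × ℕ) ⊕ Unit)

def epsLab {Q A : Type} : EncLabel Q A := Sum.inr (Sum.inr ())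

def symLab {Q A : Type} (τ : Letter A) : EncLabel Q A := Sum.inr (Sum.inl (symOf τ, lvlOf τ))

/-- Encoding of blocklines as trees (with a fuel parameter driving the recursion;
the fuel used in `encStack` is large enough so that it never runs out on actual
blocklines). The left subtree encodes the blockline induced by the first maximal
block, the right subtree the remaining blocks. -/
def encBL (Q : Type) {A : Type} [DecidableEq A] :
    ℕ → EncLabel Q A → List (Word A) → PTree (EncLabel Q A)
  | 0, σ, _ => .node σ none none
  | _ + 1, σ, [] => .node σ none none
  | fuel + 1, σ, w :: rest =>
    if w.length ≤ 1 then
      match rest with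
      | [] => .node σ none none
      | _ :: _ => .node σ none (some (encBL Q fuel epsLab rest))
    else
      let p : Word A → Bool := fun v => decide (v.take 2 = w.take 2)
      let blk := (w :: rest).takeWhile p
      let restBlk := (w :: rest).dropWhile p
      .node σ
        (some (encBL Q fuel
          (match w[1]? with | some τ' => symLab τ' | none => epsLab)
          (blk.map List.tail)))
        (match restBlk with
          | [] => none
          | _ :: _ => some (encBL Q fuel epsLab restBlk))

/-- The total number of letters of a 2-word. -/
def size2 {A : Type} (s : Stack2 A) : ℕ := (s.map List.length).sum

/-- The encoding `Enc(s) = Enc(s, (⊥,1))` of a stack. -/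
def encStack (Q : Type) {A : Type} [DecidableEq A] (bot : A) (s : Stack2 A) :
    PTree (EncLabel Q A) :=
  encBL Q (size2 s + 1) (Sum.inr (Sum.inl (bot, 1))) s

/-- The encoding of a configuration: the state at the root, `Enc(s)` as left subtree. -/
def Enc {Q A : Type} [DecidableEq A] (bot : A) (c : Q × Stack2 A) : PTree (EncLabel Q A) :=
  .node (Sum.inl c.1) (some (encStack Q bot c.2)) none

/-- The class `EncTrees` of encoding trees. -/
def EncTrees (Q A : Type) (bot : A) : Set (PTree (EncLabel Q A)) :=
  {T | (∃ q : Q, T.labelAt [] = some (Sum.inl q)) ∧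
    T.labelAt [true] = none ∧ T.labelAt [false] ≠ none ∧
    T.labelAt [false] = some (Sum.inr (Sum.inl (bot, 1))) ∧
    (∀ (d : List Bool) (x : EncLabel Q A),
      T.labelAt (false :: (d ++ [false])) = some x →
        ∃ (σ : A) (l : ℕ), σ ≠ bot ∧ (l = 1 ∨ l = 2) ∧ x = Sum.inr (Sum.inl (σ, l))) ∧
    (∀ (d : List Bool) (x : EncLabel Q A), T.labelAt (d ++ [true]) = some x → x = epsLab) ∧
    (∀ (d : List Bool) (σ : A), ¬ (T.labelAt (d ++ [false]) = some (Sum.inr (Sum.inl (σ, 1))) ∧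
      T.labelAt (d ++ [true, false]) = some (Sum.inr (Sum.inl (σ, 1)))))}

/-- Restriction of a tree to the nodes lexicographically ≤ `d`. -/
def restrictLex {α : Type} : PTree α → List Bool → PTree α
  | .node a _ _, [] => .node a none none
  | .node a l _, false :: d =>
      .node a (match l with | none => none | some t => some (restrictLex t d)) none
  | .node a l r, true :: d =>
      .node a l (match r with | none => none | some t => some (restrictLex t d))

/-- The lexicographic order on tree addresses. -/
def lexLe (d e : List Bool) : Prop :=
  d <+: e ∨ ∃ (c x y : List Bool), d = c ++ false :: x ∧ e = c ++ true :: y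

/-! ## Deterministic finite automata with output (Moore machines) -/

structure Moore (α ω : Type) where
  St : Type
  fin : Finite St
  init : St
  step : St → α → St
  out : St → ω

def Moore.output {α ω : Type} (M : Moore α ω) (w : List α) : ω :=
  M.out (w.foldl M.step M.init)

def symW {A : Type} (w : Word A) : Option A := w.getLast?.map symOf

def lvlW {A : Type} (w : Word A) : Option ℕ := w.getLast?.map lvlOf

/-!
In `w↓₀` every link points below the stack, so a run that keeps more than `|s|` words never looks at
the words `s` under its starting stack `s : w`; the returns and loops at `w` depend on `w` alone.

Consider `w = v x`. In a run from `s : v x` that stays above `s`, all words keep the common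
prefix `v`. Cutting this prefix off leaves a run on short words, except where a word is reduced
to `v` itself. In a return, a high loop or a 1-loop such a word is later removed again by a return
of `v`, and all that matters is that this return changes the state along a pair in `ExRet v`. So
`ExRet`, `ExHLoop` and `ExOneLoop` of `v x` are determined by `ExRet v` and `x`. A low loop of `v x`
is a `Pop₁`, a loop of `v`, and a push that restores `x`, so `ExLLoop (v x)` depends on
`ExLoop v`, `Sym v` and `x`; every loop is a concatenation of high and low loops. Therefore
`(ExRet v, ExLoop v, Sym v, x)` determines all the outputs at `v x`, in particular the
data needed for the next letter. These tuples are the states of the automaton; since `⊥` occurs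
exactly at the bottom of a word, the one-letter word `⊥` is recognised by its symbol.
-/

/-! ### Stack operations -/

/-- `op` acts as `Pop₁` on every stack with topmost letter `x`. -/
def Pops {A : Type} (op : Op A) (x : Letter A) : Prop :=
  op = .pop1 ∨ op = .collapse ∧ lvlOf x = 1

/-- `OpEffect b op s u t`: applying `op` to the stack with topmost word `u` and words `s` below
it yields `t`. This is `applyOp` as a relation with one rule per way in which a stack can change. -/
inductive OpEffect {A : Type} (b : A) : Op A → Stack2 A → Word A → Stack2 A → Prop
  | clone2 (s : Stack2 A) (u : Word A) : OpEffect b .clone2 s u (s ++ [u] ++ [u])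
  | push1 (s : Stack2 A) (u : Word A) {a : A} (ha : a ≠ b) :
      OpEffect b (.push1 a) s u (s ++ [u ++ [Sum.inl a]])
  | push2 (s : Stack2 A) (u : Word A) {a : A} (ha : a ≠ b) :
      OpEffect b (.push2 a) s u (s ++ [u ++ [Sum.inr (a, s.length)]])
  | pop2 {s : Stack2 A} (u : Word A) (hs : s ≠ []) : OpEffect b .pop2 s u s
  | pop {op : Op A} {x : Letter A} (s : Stack2 A) {u : Word A} (hop : Pops op x) (hu : u ≠ []) :
      OpEffect b op s (u ++ [x]) (s ++ [u])
  | collapse (s : Stack2 A) (u : Word A) (a : A) {k : ℕ} (hk : 0 < k) :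
      OpEffect b .collapse s (u ++ [Sum.inr (a, k)]) ((s ++ [u ++ [Sum.inr (a, k)]]).take k)

theorem applyOp_nil (b : A) (op : Op A) : applyOp b op [] = none := by
  cases op <;> simp [applyOp, clone2, push1, push2, pop2, pop1, collapse, top1, top2]

theorem symS_snoc {A : Type} (s : Stack2 A) (u : Word A) : symS (s ++ [u]) = symW u := by
  simp [symS, symW, top1]

theorem pop1_snoc_eq_some_iff {A : Type} {s t : Stack2 A} {u : Word A} :
    pop1 (s ++ [u]) = some t ↔ ∃ v x, u = v ++ [x] ∧ v ≠ [] ∧ t = s ++ [v] := by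
  rcases List.eq_nil_or_concat' u with rfl | ⟨v, x, rfl⟩
  · simp [pop1]
  · simp [pop1, List.length_pos_iff, eq_comm]

theorem collapse_snoc_eq_some_iff {A : Type} {s t : Stack2 A} {u : Word A} :
    collapse (s ++ [u]) = some t ↔
      (∃ v a, u = v ++ [Sum.inl a] ∧ v ≠ [] ∧ t = s ++ [v]) ∨
        ∃ v a k, u = v ++ [Sum.inr (a, k)] ∧ 0 < k ∧ t = (s ++ [u]).take k := by
  rcases List.eq_nil_or_concat' u with rfl | ⟨v, a | ⟨a, k⟩, rfl⟩
  · simp [collapse, top1]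
  · have hpop : collapse (s ++ [v ++ [Sum.inl a]]) = pop1 (s ++ [v ++ [Sum.inl a]]) := by
      simp [collapse, top1]
    simp [hpop, pop1_snoc_eq_some_iff, List.append_singleton_inj]
  · simp [collapse, top1, eq_comm]

theorem applyOp_snoc_iff {b : A} {op : Op A} {s t : Stack2 A} {u : Word A} :
    applyOp b op (s ++ [u]) = some t ↔ OpEffect b op s u t := by
  constructor
  · intro h
    cases op with
    | clone2 =>
      obtain rfl : s ++ [u] ++ [u] = t := by simpa [applyOp, clone2, top2] using h
      exact .clone2 s u
    | push1 a =>
      obtain ⟨ha, rfl⟩ : a ≠ b ∧ s ++ [u ++ [Sum.inl a]] = t := by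
        simpa [applyOp, push1, top2] using h
      exact .push1 s u ha
    | push2 a =>
      obtain ⟨ha, rfl⟩ : a ≠ b ∧ s ++ [u ++ [Sum.inr (a, s.length)]] = t := by
        simpa [applyOp, push2, top2] using h
      exact .push2 s u ha
    | pop2 =>
      obtain ⟨hs, rfl⟩ : s ≠ [] ∧ s = t := by
        simpa [applyOp, pop2, List.length_pos_iff] using h
      exact .pop2 u hs
    | pop1 =>
      obtain ⟨v, x, rfl, hv, rfl⟩ := pop1_snoc_eq_some_iff.1 h
      exact .pop s (.inl rfl) hv
    | collapse =>
      obtain ⟨v, a, rfl, hv, rfl⟩ | ⟨v, a, k, rfl, hk, rfl⟩ := collapse_snoc_eq_some_iff.1 h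
      · exact .pop s (.inr ⟨rfl, rfl⟩) hv
      · exact .collapse s v a hk
  · intro h
    cases h with
    | clone2 => simp [applyOp, clone2, top2]
    | push1 _ _ ha => simp [applyOp, push1, top2, ha]
    | push2 _ _ ha => simp [applyOp, push2, top2, ha]
    | pop2 _ hs => simp [applyOp, pop2, List.length_pos_iff, hs]
    | pop _ hop hu =>
      obtain rfl | ⟨rfl, hx⟩ := hop
      · exact pop1_snoc_eq_some_iff.2 ⟨_, _, rfl, hu, rfl⟩
      · rename_i x v
        obtain a | ⟨a, k⟩ := x
        · exact collapse_snoc_eq_some_iff.2 (.inl ⟨_, _, rfl, hu, rfl⟩)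
        · cases hx
    | collapse _ _ _ hk => exact collapse_snoc_eq_some_iff.2 (.inr ⟨_, _, _, rfl, hk, rfl⟩)

/-- `WordStep b n u v`: one operation on a stack whose topmost word `u` has `n` words below it
can turn `u` into the word `v`. -/
inductive WordStep {A : Type} (b : A) (n : ℕ) : Word A → Word A → Prop
  | refl (u : Word A) : WordStep b n u u
  | push1 (u : Word A) {a : A} (ha : a ≠ b) : WordStep b n u (u ++ [Sum.inl a])
  | push2 (u : Word A) {a : A} (ha : a ≠ b) : WordStep b n u (u ++ [Sum.inr (a, n)])
  | pop {u : Word A} (x : Letter A) (hu : u ≠ []) : WordStep b n (u ++ [x]) u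

theorem WordStep.ne_nil {A : Type} {b : A} {n : ℕ} {u v : Word A} (h : WordStep b n u v)
    (hu : u ≠ []) : v ≠ [] := by
  cases h <;> simp_all

theorem OpEffect.eq_take_or {A : Type} {b : A} {op : Op A} {s t : Stack2 A} {u : Word A}
    (h : OpEffect b op s u t) :
    (∃ k, 0 < k ∧ t = (s ++ [u]).take k) ∨ t = s ++ [u] ++ [u] ∨
      ∃ v, t = s ++ [v] ∧ WordStep b s.length u v := by
  cases h with
  | clone2 => exact .inr (.inl rfl)
  | push1 _ _ ha => exact .inr (.inr ⟨_, rfl, .push1 _ ha⟩)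
  | push2 _ _ ha => exact .inr (.inr ⟨_, rfl, .push2 _ ha⟩)
  | pop2 _ hs => exact .inl ⟨s.length, List.length_pos_iff.2 hs, by simp⟩
  | pop _ _ hu => exact .inr (.inr ⟨_, rfl, .pop _ hu⟩)
  | collapse _ _ _ hk => exact .inl ⟨_, hk, rfl⟩

/-- The effect of an operation on a stack `s ++ u :: r`, seen from the word `u`: either everything
from `u` on is removed, or `s` stays untouched and `u` changes only if it is the topmost word. -/
theorem applyOp_append_cons {b : A} {op : Op A} {s r t : Stack2 A} {u : Word A}
    (h : applyOp b op (s ++ u :: r) = some t) :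
    (∃ k, 0 < k ∧ k ≤ s.length ∧ t = s.take k) ∨
      ∃ u' r', t = s ++ u' :: r' ∧ (u' = u ∨ r = [] ∧ r' = []) ∧ WordStep b s.length u u' ∧
        ∀ y ∈ r', ∃ z ∈ u :: r, WordStep b (s.length + r.length) z y := by
  obtain ⟨r₀, z, hr⟩ : ∃ r₀ z, u :: r = r₀ ++ [z] :=
    (List.eq_nil_or_concat' (u :: r)).resolve_left (List.cons_ne_nil u r)
  rw [hr, ← List.append_assoc] at h
  obtain ⟨k, hk, rfl⟩ | rfl | ⟨v, rfl, hv⟩ := (applyOp_snoc_iff.1 h).eq_take_or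
  · rw [List.append_assoc, ← hr]
    rcases le_or_gt k s.length with hks | hks
    · exact .inl ⟨k, hk, hks, List.take_append_of_le_length hks⟩
    · obtain ⟨k, rfl⟩ := Nat.exists_eq_add_of_lt hks
      refine .inr ⟨u, r.take k, by simp [List.take_append, Nat.add_assoc], .inl rfl, .refl u,
        fun y hy => ⟨y, .tail _ (List.mem_of_mem_take hy), .refl y⟩⟩
  · refine .inr ⟨u, r ++ [z], by simp [← hr], .inl rfl, .refl u, fun y hy => ⟨y, ?_, .refl y⟩⟩
    obtain hy | rfl : y ∈ r ∨ y = z := by simpa using hy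
    · exact .tail _ hy
    · simp [hr]
  · rcases r₀ with _ | ⟨u₀, r₀⟩
    · obtain ⟨rfl, rfl⟩ : u = z ∧ r = [] := by simpa using hr
      exact .inr ⟨v, [], by simp, .inr ⟨rfl, rfl⟩, by simpa using hv, by simp⟩
    · obtain ⟨rfl, rfl⟩ : u = u₀ ∧ r = r₀ ++ [z] := by simpa using hr
      refine .inr ⟨u, r₀ ++ [v], by simp, .inl rfl, .refl u, fun y hy => ?_⟩
      obtain hy | rfl : y ∈ r₀ ∨ y = v := by simpa using hy
      · exact ⟨y, by simp [hy], .refl y⟩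
      · exact ⟨z, by simp, by simpa [Nat.add_assoc] using hv⟩

theorem exists_wordStep_of_applyOp {b : A} {op : Op A} {s t : Stack2 A}
    (h : applyOp b op s = some t) {y : Word A} (hy : y ∈ t) :
    ∃ z ∈ s, ∃ n, WordStep b n z y := by
  rcases List.eq_nil_or_concat' s with rfl | ⟨s, u, rfl⟩
  · simp [applyOp_nil] at h
  · obtain ⟨k, -, rfl⟩ | rfl | ⟨v, rfl, hv⟩ := (applyOp_snoc_iff.1 h).eq_take_or
    · exact ⟨y, List.mem_of_mem_take hy, 0, .refl y⟩
    · exact ⟨y, by simpa using hy, 0, .refl y⟩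
    · obtain hy | rfl : y ∈ s ∨ y = v := by simpa using hy
      · exact ⟨y, by simp [hy], 0, .refl y⟩
      · exact ⟨u, by simp, _, hv⟩

theorem nil_notMem_of_applyOp {b : A} {op : Op A} {s t : Stack2 A}
    (h : applyOp b op s = some t) (hs : [] ∉ s) : [] ∉ t := by
  intro ht
  obtain ⟨z, hz, n, hzn⟩ := exists_wordStep_of_applyOp h ht
  exact hzn.ne_nil (ne_of_mem_of_not_mem hz hs) rfl

/-! ### Words without links -/

/-- The words `w` with `w↓₀ = w`: all level-2 links are `0`. Such a word makes sense as a part of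
any stack, since `Collapse` is undefined on a link `0`. -/
def ZeroLinks {A : Type} (w : Word A) : Prop :=
  ∀ a k, Sum.inr (a, k) ∈ w → k = 0

theorem zeroLinks_down0 {A : Type} (w : Word A) : ZeroLinks (down0 w) := by
  intro a k h
  obtain ⟨x | ⟨x, j⟩, -, hx⟩ := List.mem_map.1 h
  · cases hx
  · exact (Prod.ext_iff.1 (Sum.inr.inj hx)).2.symm

theorem ZeroLinks.down0_eq {A : Type} {w : Word A} (h : ZeroLinks w) : down0 w = w := by
  refine (List.map_congr_left (g := id) fun x hx => ?_).trans (List.map_id w)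
  obtain x | ⟨x, k⟩ := x
  · rfl
  · rw [h x k hx]; rfl

theorem ZeroLinks.of_append {A : Type} {u v : Word A} (h : ZeroLinks (u ++ v)) : ZeroLinks u :=
  fun a k hk => h a k (List.mem_append_left v hk)

/-! ### Runs and reachability -/

/-- There is a transition from `c` to `d`. -/
def Step (S : CPS Q A Γ) (c d : Q × Stack2 A) : Prop :=
  ∃ γ, Trans S γ c d

/-- `d` is reachable from `c` through configurations whose stacks satisfy `P`; nothing is required
of `d` itself. -/
def ReachWhile (S : CPS Q A Γ) (P : Stack2 A → Prop) : Q × Stack2 A → Q × Stack2 A → Prop :=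
  Relation.ReflTransGen fun c d => P c.2 ∧ Step S c d

theorem Step.exists_applyOp {S : CPS Q A Γ} {c d : Q × Stack2 A} (h : Step S c d) :
    ∃ op, applyOp S.bot op c.2 = some d.2 := by
  obtain ⟨γ, op, a, -, -, h⟩ := h
  exact ⟨op, h⟩

theorem ReachWhile.mono {S : CPS Q A Γ} {P P' : Stack2 A → Prop} {c d : Q × Stack2 A}
    (h : ReachWhile S P c d) (hP : ∀ s, P s → P' s) : ReachWhile S P' c d :=
  Relation.ReflTransGen.mono (fun c _ hc => ⟨hP c.2 hc.1, hc.2⟩) _ _ h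

theorem Run.step {S : CPS Q A Γ} (ρ : Run S) {i : ℕ} (hi : i < ρ.len) :
    Step S (ρ.cfg i) (ρ.cfg (i + 1)) :=
  ⟨ρ.lab i, ρ.op i, ρ.ok i hi⟩

theorem Run.reachWhile {S : CPS Q A Γ} (ρ : Run S) {P : Stack2 A → Prop} {i j : ℕ} (hij : i ≤ j)
    (hj : j ≤ ρ.len) (hP : ∀ k, i ≤ k → k < j → P (ρ.stk k)) :
    ReachWhile S P (ρ.cfg i) (ρ.cfg j) := by
  induction j, hij using Nat.le_induction with
  | base => exact .refl
  | succ j hij ih =>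
    exact (ih (by omega) fun k hk hkj => hP k hk (by omega)).tail
      ⟨hP j hij j.lt_succ_self, ρ.step hj⟩

theorem exists_run_len_eq_zero [Nonempty Γ] (S : CPS Q A Γ) (c : Q × Stack2 A) :
    ∃ ρ : Run S, ρ.len = 0 ∧ ρ.cfg 0 = c :=
  ⟨⟨0, fun _ => c, fun _ => Classical.arbitrary Γ, fun _ => .clone2, by simp⟩, rfl, rfl⟩

theorem Step.exists_run_cons {S : CPS Q A Γ} {ρ : Run S} {c : Q × Stack2 A}
    (h : Step S c (ρ.cfg 0)) :
    ∃ τ : Run S, τ.len = ρ.len + 1 ∧ τ.cfg 0 = c ∧ ∀ k, τ.cfg (k + 1) = ρ.cfg k := by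
  obtain ⟨γ, op, h⟩ := h
  refine ⟨⟨ρ.len + 1, fun | 0 => c | k + 1 => ρ.cfg k, fun | 0 => γ | k + 1 => ρ.lab k,
    fun | 0 => op | k + 1 => ρ.op k, fun i hi => ?_⟩, rfl, rfl, fun k => rfl⟩
  cases i with
  | zero => exact h
  | succ i => exact ρ.ok i (by omega)

/-- `Γ` has to be nonempty because even a run of length `0` carries a labelling `ℕ → Γ`. -/
theorem exists_run_iff {S : CPS Q A Γ} {P : Stack2 A → Prop} {c d : Q × Stack2 A} :
    (∃ ρ : Run S, ρ.cfg 0 = c ∧ ρ.cfg ρ.len = d ∧ ∀ k < ρ.len, P (ρ.stk k)) ↔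
      Nonempty Γ ∧ ReachWhile S P c d := by
  constructor
  · rintro ⟨ρ, rfl, rfl, hP⟩
    exact ⟨⟨ρ.lab 0⟩, ρ.reachWhile ρ.len.zero_le le_rfl fun k _ hk => hP k hk⟩
  · rintro ⟨_, h⟩
    induction h using Relation.ReflTransGen.head_induction_on with
    | refl =>
      obtain ⟨ρ, hlen, rfl⟩ := exists_run_len_eq_zero S d
      exact ⟨ρ, rfl, by rw [hlen], by simp [hlen]⟩
    | @head c c' hc _ ih =>
      obtain ⟨ρ, rfl, hd, hρ⟩ := ih
      obtain ⟨τ, hlen, h0, hτ⟩ := hc.2.exists_run_cons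
      refine ⟨τ, h0, by rw [hlen, hτ, hd], fun k hk => ?_⟩
      cases k with
      | zero => rw [Run.stk, h0]; exact hc.1
      | succ k => rw [Run.stk, hτ]; exact hρ k (by omega)

/-! ### Changing the words below a run -/

/-- No level-2 link of `w` points to a stack of width less than `n`, except for the dead links
`0`. -/
def LinksAbove {A : Type} (n : ℕ) (w : Word A) : Prop :=
  ∀ a k, Sum.inr (a, k) ∈ w → k = 0 ∨ n ≤ k

/-- Redirects a link to the substack of width `k ≥ n` to the one of width `k - n + m`; dead links
stay dead. -/
def shiftLink {A : Type} (n m : ℕ) : Letter A → Letter A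
  | Sum.inl a => Sum.inl a
  | Sum.inr (a, k) => Sum.inr (a, if k = 0 then 0 else k - n + m)

/-- The words `T` of a stack `s ++ T` with `|s| = n`, moved onto a stack of width `m`. -/
def rebase {A : Type} (n m : ℕ) (T : Stack2 A) : Stack2 A :=
  T.map (List.map (shiftLink n m))

theorem ZeroLinks.linksAbove {A : Type} {w : Word A} (h : ZeroLinks w) (n : ℕ) :
    LinksAbove n w :=
  fun a k hk => .inl (h a k hk)

theorem LinksAbove.of_append {A : Type} {n : ℕ} {u v : Word A} (h : LinksAbove n (u ++ v)) :
    LinksAbove n u :=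
  fun a k hk => h a k (List.mem_append_left v hk)

theorem LinksAbove.append_singleton {A : Type} {n : ℕ} {u : Word A} {x : Letter A}
    (h : LinksAbove n u) (hx : ∀ a k, x = Sum.inr (a, k) → n ≤ k) : LinksAbove n (u ++ [x]) := by
  intro a k hk
  obtain hk | hk := List.mem_append.1 hk
  · exact h a k hk
  · exact .inr (hx a k (List.mem_singleton.1 hk).symm)

theorem Pops.shiftLink {A : Type} {op : Op A} {x : Letter A} (h : Pops op x) (n m : ℕ) :
    Pops op (shiftLink n m x) := by
  cases x <;> exact h

theorem ZeroLinks.map_shiftLink {A : Type} {w : Word A} (h : ZeroLinks w) (n m : ℕ) :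
    w.map (shiftLink n m) = w := by
  refine (List.map_congr_left (g := id) fun x hx => ?_).trans (List.map_id w)
  obtain x | ⟨x, k⟩ := x
  · rfl
  · simp [shiftLink, h x k hx]

theorem symS_append_rebase {A : Type} {T : Stack2 A} (hT : T ≠ []) (s s' : Stack2 A) (n m : ℕ) :
    symS (s' ++ rebase n m T) = symS (s ++ T) := by
  obtain ⟨T, u, rfl⟩ := (List.eq_nil_or_concat' T).resolve_left hT
  have hsym : symOf ∘ shiftLink n m = (symOf : Letter A → A) := by
    funext x; cases x <;> rfl
  simp only [rebase, List.map_append, List.map_cons, List.map_nil, ← List.append_assoc,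
    symS_snoc, symW, List.getLast?_map, Option.map_map, hsym]

theorem OpEffect.rebase {A : Type} {b : A} {op : Op A} {s s' T t : Stack2 A} {u : Word A}
    (hs : s ≠ []) (hs' : s' ≠ []) (hT : ∀ v ∈ T ++ [u], LinksAbove s.length v)
    (h : OpEffect b op (s ++ T) u t) :
    ∃ T₁, t = s ++ T₁ ∧ (∀ v ∈ T₁, LinksAbove s.length v) ∧
      OpEffect b op (s' ++ rebase s.length s'.length T) (u.map (shiftLink s.length s'.length))
        (s' ++ rebase s.length s'.length T₁) := by
  have hu : LinksAbove s.length u := hT u (by simp)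
  have hsnoc {v : Word A} (hv : LinksAbove s.length v) :
      ∀ y ∈ T ++ [v], LinksAbove s.length y := by
    rw [List.forall_mem_append] at hT ⊢
    exact ⟨hT.1, by simpa using hv⟩
  set T' := CPG.rebase s.length s'.length T with hT'
  set u' := u.map (shiftLink s.length s'.length) with hu'
  cases h with
  | clone2 =>
    refine ⟨T ++ [u] ++ [u], by simp, by simpa using hT, ?_⟩
    simpa [CPG.rebase, hT', hu'] using OpEffect.clone2 (b := b) (s' ++ T') u'
  | @push1 _ _ a ha =>
    refine ⟨T ++ [u ++ [Sum.inl a]], by simp, hsnoc (hu.append_singleton (by simp)), ?_⟩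
    simpa [CPG.rebase, shiftLink, hT', hu'] using OpEffect.push1 (s' ++ T') u' ha
  | @push2 _ _ a ha =>
    refine ⟨T ++ [u ++ [Sum.inr (a, (s ++ T).length)]], by simp,
      hsnoc (hu.append_singleton (by simp)), ?_⟩
    simpa [CPG.rebase, shiftLink, hs, Nat.add_comm, hT', hu'] using
      OpEffect.push2 (s' ++ T') u' ha
  | pop2 => exact ⟨T, rfl, (List.forall_mem_append.1 hT).1, .pop2 _ (by simp [hs'])⟩
  | @pop _ x _ v hop hv =>
    refine ⟨T ++ [v], by simp, hsnoc hu.of_append, ?_⟩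
    simpa [CPG.rebase, hT', hu'] using
      OpEffect.pop (b := b) (s' ++ T') (u := v.map (shiftLink s.length s'.length))
        (hop.shiftLink s.length s'.length) (by simpa using hv)
  | @collapse _ v a k hk =>
    have hks : s.length ≤ k := (hu a k (by simp)).resolve_left hk.ne'
    refine ⟨(T ++ [v ++ [Sum.inr (a, k)]]).take (k - s.length), ?_,
      fun y hy => hT y (List.mem_of_mem_take hy), ?_⟩
    · rw [List.append_assoc, List.take_append, List.take_of_length_le hks]
    · have hs'k : s'.take (k - s.length + s'.length) = s' := List.take_of_length_le (by omega)
      simpa [CPG.rebase, shiftLink, hk.ne', List.take_append, hs'k, hT', hu'] using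
        OpEffect.collapse (b := b) (s' ++ T') (v.map (shiftLink s.length s'.length)) a
          (k := k - s.length + s'.length) (Nat.add_pos_right _ (List.length_pos_iff.2 hs'))

theorem applyOp_rebase {b : A} {op : Op A} {s s' T t : Stack2 A} (hs : s ≠ []) (hs' : s' ≠ [])
    (hT : T ≠ []) (hlink : ∀ u ∈ T, LinksAbove s.length u) (h : applyOp b op (s ++ T) = some t) :
    ∃ T₁, t = s ++ T₁ ∧ (∀ u ∈ T₁, LinksAbove s.length u) ∧
      applyOp b op (s' ++ rebase s.length s'.length T) =
        some (s' ++ rebase s.length s'.length T₁) := by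
  obtain ⟨T, u, rfl⟩ := (List.eq_nil_or_concat' T).resolve_left hT
  rw [← List.append_assoc, applyOp_snoc_iff] at h
  obtain ⟨T₁, ht, hT₁, h'⟩ := h.rebase hs hs' hlink
  exact ⟨T₁, ht, hT₁, by simpa [rebase] using applyOp_snoc_iff.2 h'⟩

/-- As long as the width stays above `|s|`, a run can neither inspect nor change the words `s`. -/
theorem ReachWhile.rebase {S : CPS Q A Γ} {s s' T : Stack2 A} {q : Q} {d : Q × Stack2 A}
    (hs : s ≠ []) (hs' : s' ≠ []) (hlink : ∀ u ∈ T, LinksAbove s.length u)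
    (h : ReachWhile S (s.length < ·.length) (q, s ++ T) d) :
    ∃ T₁, d.2 = s ++ T₁ ∧ (∀ u ∈ T₁, LinksAbove s.length u) ∧
      ReachWhile S (s'.length < ·.length) (q, s' ++ rebase s.length s'.length T)
        (d.1, s' ++ rebase s.length s'.length T₁) := by
  induction h with
  | refl => exact ⟨T, rfl, hlink, .refl⟩
  | @tail c d _ hcd ih =>
    obtain ⟨hwidth, γ, op, a, hsym, hΔ, hop⟩ := hcd
    obtain ⟨T₁, hc, hT₁, hreach⟩ := ih
    rw [hc] at hwidth hsym hop
    have hne : T₁ ≠ [] := by rintro rfl; simp at hwidth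
    obtain ⟨T₂, hd, hT₂, hop'⟩ := applyOp_rebase hs hs' hne hT₁ hop
    refine ⟨T₂, hd, hT₂, hreach.tail ⟨?_, γ, op, a, ?_, hΔ, hop'⟩⟩
    · simpa [CPG.rebase, List.length_pos_iff] using hne
    · rwa [symS_append_rebase hne s]

/-! ### Returns -/

theorem reachWhile_pop_of_ne_nil {S : CPS Q A Γ} {s s' : Stack2 A} {v : Word A} {q q' : Q}
    (hs : s ≠ []) (hs' : s' ≠ []) (hv : ZeroLinks v)
    (h : ReachWhile S (s.length < ·.length) (q, s ++ [v]) (q', s)) :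
    ReachWhile S (s'.length < ·.length) (q, s' ++ [v]) (q', s') := by
  obtain ⟨T, hT, -, h'⟩ := h.rebase hs hs' (by simpa using hv.linksAbove _)
  obtain rfl : T = [] := by simpa using hT
  simpa [rebase, hv.map_shiftLink] using h'

theorem Substack.length_le {A : Type} {s t : Stack2 A} (h : Substack t s) :
    t.length ≤ s.length := by
  obtain ⟨n, m, h⟩ := h
  have hiter {f : Stack2 A → Option (Stack2 A)}
      (hf : ∀ s t, f s = some t → t.length ≤ s.length) (n : ℕ) :
      ∀ s t, iter f n s = some t → t.length ≤ s.length := by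
    induction n with
    | zero => rintro s t ⟨⟩; rfl
    | succ n ih =>
      intro s t hst
      obtain ⟨u, hu, hut⟩ := Option.bind_eq_some_iff.1 hst
      exact (ih u t hut).trans (hf s u hu)
  obtain ⟨u, hsu, hut⟩ := Option.bind_eq_some_iff.1 h
  refine (hiter (fun s t hst => ?_) n u t hut).trans (hiter (fun s t hst => ?_) m s u hsu)
  · rcases List.eq_nil_or_concat' s with rfl | ⟨s, w, rfl⟩
    · simp [pop1] at hst
    · obtain ⟨v, x, rfl, -, rfl⟩ := pop1_snoc_eq_some_iff.1 hst
      simp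
  · obtain ⟨-, rfl⟩ : 1 < s.length ∧ s.dropLast = t := by simpa [pop2] using hst
    simp

theorem Substack.refl {A : Type} (s : Stack2 A) : Substack s s := ⟨0, 0, rfl⟩

theorem pop2_snoc_eq_some_iff {A : Type} {s t : Stack2 A} {u : Word A} :
    pop2 (s ++ [u]) = some t ↔ s ≠ [] ∧ t = s := by
  simp [pop2, List.length_pos_iff, eq_comm]

theorem retShell_iff {S : CPS Q A Γ} {ρ : Run S} {i j : ℕ} {s : Stack2 A} {v : Word A}
    (hi : ρ.stk i = s ++ [v]) (hv : ZeroLinks v) :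
    RetShell ρ i j ↔ i < j ∧ j ≤ ρ.len ∧ s ≠ [] ∧ ρ.stk j = s ∧
      ∀ k, i ≤ k → k < j → s.length < (ρ.stk k).length := by
  rw [RetShell, hi, pop2_snoc_eq_some_iff]
  constructor
  · rintro ⟨hij, hj, ⟨hs, hjs⟩, hsub⟩
    rw [hjs] at hsub
    refine ⟨hij, hj, hs, hjs, fun k hik hkj => ?_⟩
    induction k using Nat.strong_induction_on with
    | _ k ih =>
      have hreach : ReachWhile S (s.length < ·.length) (ρ.cfg i) (ρ.cfg k) :=
        ρ.reachWhile hik (by omega) fun l hil hlk => ih l hlk hil (by omega)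
      rw [show ρ.cfg i = ((ρ.cfg i).1, s ++ [v]) from Prod.ext rfl hi] at hreach
      obtain ⟨T, hT, -⟩ := hreach.rebase hs hs (by simpa using hv.linksAbove _)
      have hne : T ≠ [] := by
        rintro rfl
        refine hsub k hik hkj ?_
        rw [Run.stk, hT, List.append_nil]
        exact .refl s
      simpa [Run.stk, hT, List.length_pos_iff] using hne
  · rintro ⟨hij, hj, hs, hjs, hwidth⟩
    exact ⟨hij, hj, ⟨hs, hjs⟩, fun k hik hkj hsub =>
      (hwidth k hik hkj).not_ge (hjs ▸ hsub.length_le)⟩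

theorem RetSeg.retShell {S : CPS Q A Γ} {ρ : Run S} {i j : ℕ} (h : RetSeg ρ i j) :
    RetShell ρ i j := by
  cases h <;> assumption

/-- An invariant of the runs from `s ++ [v]` that neither drop to width `|s|` nor visit
`Pop₁(s ++ [v])`: the words that carry a link to `s` extend `v`. -/
def Grows {A : Type} (s : Stack2 A) (v : Word A) (t : Stack2 A) : Prop :=
  ∃ u r, t = s ++ u :: r ∧ v <+: u ∧ ∀ y ∈ u :: r, v <+: y ∨ ∀ a, Sum.inr (a, s.length) ∉ y

theorem WordStep.prefix_or_link_notMem {A : Type} {b : A} {n m : ℕ} {v y z : Word A}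
    (h : WordStep b n z y) (hv : ZeroLinks v) (hm : m ≠ 0)
    (hz : v <+: z ∨ n ≠ m ∧ ∀ a, Sum.inr (a, m) ∉ z) : v <+: y ∨ ∀ a, Sum.inr (a, m) ∉ y := by
  cases h with
  | refl => exact hz.imp_right And.right
  | push1 _ ha => exact hz.imp (·.trans (List.prefix_append _ _)) fun h a => by simp [h.2 a]
  | push2 _ ha =>
    exact hz.imp (·.trans (List.prefix_append _ _)) fun h a => by simp [h.2 a, h.1.symm]
  | pop x hu =>
    obtain hpre | ⟨-, hz⟩ := hz
    · obtain rfl | hpre := List.prefix_concat_iff.1 hpre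
      · exact .inr fun a ha => hm (hv a m (List.mem_append_left _ ha))
      · exact .inl hpre
    · exact .inr fun a ha => hz a (List.mem_append_left _ ha)

theorem Grows.step {b : A} {op : Op A} {s t t' : Stack2 A} {v : Word A} (h : Grows s v t)
    (hs : s ≠ []) (hv : ZeroLinks v) (hop : applyOp b op t = some t')
    (hwidth : s.length < t'.length)
    (hpop : ∀ v' x, v = v' ++ [x] → v' ≠ [] → t' ≠ s ++ [v']) : Grows s v t' := by
  obtain ⟨u, r, rfl, hu, hlink⟩ := h
  obtain ⟨k, -, -, rfl⟩ | ⟨u', r', rfl, hu', hstep, hr'⟩ := applyOp_append_cons hop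
  · simp at hwidth
  have hpre : v <+: u' := by
    cases hstep with
    | refl => exact hu
    | push1 => exact hu.trans (List.prefix_append _ _)
    | push2 => exact hu.trans (List.prefix_append _ _)
    | pop x hne =>
      obtain rfl | hpre := List.prefix_concat_iff.1 hu
      · obtain ⟨-, rfl⟩ := hu'.resolve_left (by simp)
        exact absurd rfl (hpop u' x rfl hne)
      · exact hpre
  refine ⟨u', r', rfl, hpre, fun y hy => ?_⟩
  obtain rfl | hy := List.mem_cons.1 hy
  · exact .inl hpre
  obtain ⟨z, hz, hzy⟩ := hr' y hy
  refine hzy.prefix_or_link_notMem hv (by simpa using hs) ?_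
  obtain rfl | hzr := List.mem_cons.1 hz
  · exact .inl hu
  · exact (hlink z hz).imp_right fun h => ⟨by simpa using List.ne_nil_of_mem hzr, h⟩

theorem Grows.eq_pop2_or_eq_collapse {b : A} {op : Op A} {s t : Stack2 A} {v : Word A}
    (h : Grows s v t) (hv : ZeroLinks v) (hop : applyOp b op t = some s) :
    op = .pop2 ∨ op = .collapse ∧ ∃ w, top2 t = some w ∧ v <+: w ∧ v ≠ w := by
  obtain ⟨u, r, rfl, -, hlink⟩ := h
  obtain ⟨t₀, z, ht⟩ := (List.eq_nil_or_concat' (s ++ u :: r)).resolve_left (by simp)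
  have hlen : s.length + r.length = t₀.length := by
    simpa [← Nat.add_assoc] using congrArg List.length ht
  have hlast : z ∈ u :: r := by
    have : (s ++ u :: r).getLast? = some z := by simp [ht]
    rw [List.getLast?_append_of_ne_nil _ (by simp)] at this
    exact List.mem_of_getLast? this
  rw [ht] at hop ⊢
  generalize hs₁ : s = s₁ at hop
  cases applyOp_snoc_iff.1 hop with
  | pop2 => exact .inl rfl
  | @collapse _ w a k hk =>
    have hks : k = s.length := by
      have := congrArg List.length hs₁
      simp only [List.length_take, List.length_append, List.length_singleton] at this
      omega
    refine .inr ⟨rfl, _, by simp [top2], (hlink _ hlast).resolve_right ?_, ?_⟩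
    · exact fun h => h a (by simp [hks])
    · rintro rfl
      exact hk.ne' (hv a k (by simp))
  | _ =>
    have := congrArg List.length hs₁
    simp only [List.length_append, List.length_singleton] at this
    omega

theorem RetShell.retSeg_of_forall_ne {S : CPS Q A Γ} {ρ : Run S} {i j : ℕ} {s : Stack2 A}
    {v : Word A} (h : RetShell ρ i j) (hi : ρ.stk i = s ++ [v]) (hv : ZeroLinks v)
    (hpop : ∀ k, i < k → k < j → ∀ v' x, v = v' ++ [x] → v' ≠ [] → ρ.stk k ≠ s ++ [v']) :
    RetSeg ρ i j := by
  obtain ⟨hij, hj, hs, hjs, hwidth⟩ := (retShell_iff hi hv).1 h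
  have happly {k : ℕ} (hk : k < j) :
      applyOp S.bot (ρ.op k) (ρ.stk k) = some (ρ.stk (k + 1)) := by
    obtain ⟨-, -, -, hop⟩ := ρ.ok k (by omega)
    exact hop
  have hgrows (k : ℕ) (hik : i ≤ k) : k < j → Grows s v (ρ.stk k) := by
    induction k, hik using Nat.le_induction with
    | base => exact fun _ => ⟨v, [], hi, List.prefix_rfl, by simp⟩
    | succ k hik ih =>
      exact fun hkj => (ih (by omega)).step hs hv (happly (by omega)) (hwidth _ (by omega) hkj)
        (hpop _ (by omega) hkj)
  have hlast := happly (Nat.sub_one_lt_of_lt hij)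
  rw [Nat.sub_add_cancel (by omega), hjs] at hlast
  obtain hop | ⟨hop, w, hw, hpre, hne⟩ :=
    (hgrows (j - 1) (by omega) (by omega)).eq_pop2_or_eq_collapse hv hlast
  · exact .pop2 h hop
  · exact .collapse h hop ⟨v, w, by simp [hi, top2], hw, hpre, hne⟩

/-- Without links below the starting point, the side conditions on the last operation of a return
are automatic. -/
theorem RetShell.retSeg {S : CPS Q A Γ} {ρ : Run S} {i j : ℕ} {s : Stack2 A} {v : Word A}
    (h : RetShell ρ i j) (hi : ρ.stk i = s ++ [v]) (hv : ZeroLinks v) : RetSeg ρ i j := by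
  induction v using List.reverseRecOn generalizing i with
  | nil => exact h.retSeg_of_forall_ne hi hv (by simp)
  | append_singleton v x ih =>
    by_cases hvisit : ∃ k, i < k ∧ k < j ∧ v ≠ [] ∧ ρ.stk k = s ++ [v]
    · obtain ⟨k, hik, hkj, hne, hk⟩ := hvisit
      obtain ⟨-, hj, hs, hjs, hwidth⟩ := (retShell_iff hi hv).1 h
      refine .sub h hik hkj.le (by rw [hi, hk, pop1_snoc_eq_some_iff]; exact ⟨v, x, rfl, hne, rfl⟩)
        (ih ((retShell_iff hk hv.of_append).2 ?_) hk hv.of_append)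
      exact ⟨hkj, hj, hs, hjs, fun l hl => hwidth l (by omega)⟩
    · refine h.retSeg_of_forall_ne hi hv fun k hik hkj v' y hvy hne hk => hvisit ?_
      obtain ⟨rfl, -⟩ := List.append_singleton_inj.1 hvy
      exact ⟨k, hik, hkj, hne, hk⟩

theorem mem_exRet_iff {S : CPS Q A Γ} {s : Stack2 A} {w : Word A} (hs : s ≠ [])
    (hw : ZeroLinks w) {q q' : Q} :
    (q, q') ∈ ExRet S w ↔
      Nonempty Γ ∧ ReachWhile S (s.length < ·.length) (q, s ++ [w]) (q', s) := by
  have hbase : ReachWhile S (s.length < ·.length) (q, s ++ [w]) (q', s) ↔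
      ReachWhile S ([w].length < ·.length) (q, [w] ++ [w]) (q', [w]) :=
    ⟨reachWhile_pop_of_ne_nil hs (by simp) hw, reachWhile_pop_of_ne_nil (by simp) hs hw⟩
  rw [hbase, ← exists_run_iff]
  simp only [ExRet, Set.mem_ofPred_eq, hw.down0_eq]
  refine exists_congr fun ρ => and_congr_right fun h0 => and_congr_right fun hend => ?_
  have hstk : ρ.stk 0 = [w] ++ [w] := by rw [Run.stk, h0]; rfl
  constructor
  · intro hret
    obtain ⟨-, -, -, -, hwidth⟩ := (retShell_iff hstk hw).1 hret.retShell
    exact fun k => hwidth k (Nat.zero_le k)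
  · intro hwidth
    refine RetShell.retSeg ((retShell_iff hstk hw).2 ⟨Nat.pos_of_ne_zero fun hlen => ?_, le_rfl,
      by simp, by rw [Run.stk, hend], fun k _ => hwidth k⟩) hstk hw
    rw [hlen, h0] at hend
    simp at hend

theorem retSeg_of_length_le {S : CPS Q A Γ} {ρ : Run S} {k m : ℕ} {s : Stack2 A} {v : Word A}
    (hs : s ≠ []) (hv : ZeroLinks v) (hk : ρ.stk k = s ++ [v]) (hkm : k ≤ m) (hm : m ≤ ρ.len)
    (hwidth : ∀ l, k ≤ l → l < m → s.length < (ρ.stk l).length)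
    (hdrop : (ρ.stk m).length ≤ s.length) : ρ.stk m = s ∧ RetSeg ρ k m := by
  have h := ρ.reachWhile (P := (s.length < ·.length)) hkm hm hwidth
  rw [show ρ.cfg k = ((ρ.cfg k).1, s ++ [v]) from Prod.ext rfl hk] at h
  obtain ⟨T, hT, -⟩ := h.rebase hs hs (by simpa using hv.linksAbove _)
  have hms : ρ.stk m = s ++ T := hT
  obtain rfl : T = [] := by simpa [hms] using hdrop
  rw [List.append_nil] at hms
  have hlt : k < m := hkm.lt_of_ne fun h => by simp [← h, hk] at hdrop
  exact ⟨hms, RetShell.retSeg ((retShell_iff hk hv).2 ⟨hlt, hm, hs, hms, hwidth⟩) hk hv⟩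

/-! ### Cutting off a common prefix of all words -/

/-- The 2-word obtained from `T` by putting `w` in front of each of its words. -/
def prependAll {A : Type} (w : Word A) (T : Stack2 A) : Stack2 A :=
  T.map (w ++ ·)

theorem length_prependAll {A : Type} (w : Word A) (T : Stack2 A) :
    (prependAll w T).length = T.length :=
  List.length_map _

theorem prependAll_append {A : Type} (w : Word A) (T U : Stack2 A) :
    prependAll w (T ++ U) = prependAll w T ++ prependAll w U :=
  List.map_append

theorem prependAll_singleton {A : Type} (w u : Word A) : prependAll w [u] = [w ++ u] := rfl

theorem prependAll_injective {A : Type} (w : Word A) : Function.Injective (prependAll w) :=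
  List.map_injective_iff.2 fun _ _ => List.append_cancel_left

theorem prependAll_ne_snoc {A : Type} {w : Word A} {T s : Stack2 A} (hT : [] ∉ T) :
    prependAll w T ≠ s ++ [w] := by
  intro h
  obtain ⟨u, hu, huw⟩ : ∃ u ∈ T, w ++ u = w :=
    List.mem_map.1 (show w ∈ prependAll w T by simp [h])
  exact hT (List.append_right_eq_self.1 huw ▸ hu)

theorem symS_prependAll {A : Type} {T : Stack2 A} (w : Word A) (hT : [] ∉ T) :
    symS (prependAll w T) = symS T := by
  rcases List.eq_nil_or_concat' T with rfl | ⟨T, u, rfl⟩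
  · rfl
  · have hu : u ≠ [] := by rintro rfl; simp at hT
    rw [prependAll_append, prependAll_singleton, symS_snoc, symS_snoc, symW, symW,
      List.getLast?_append_of_ne_nil _ hu]

theorem opEffect_prependAll_iff {A : Type} {b : A} {op : Op A} {w u : Word A} {x : Letter A}
    {T t : Stack2 A} (hw : w ≠ []) :
    OpEffect b op (prependAll w T) (w ++ (u ++ [x])) t ↔
      (∃ T₁, t = prependAll w T₁ ∧ OpEffect b op T (u ++ [x]) T₁) ∨
        u = [] ∧ Pops op x ∧ t = prependAll w T ++ [w] := by
  constructor
  · intro h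
    generalize hy : w ++ (u ++ [x]) = y at h
    cases h with
    | clone2 => exact .inl ⟨_, by simp [prependAll, hy], .clone2 T (u ++ [x])⟩
    | push1 _ _ ha => exact .inl ⟨_, by simp [prependAll, ← hy], .push1 T (u ++ [x]) ha⟩
    | push2 _ _ ha => exact .inl ⟨_, by simp [prependAll, ← hy], .push2 T (u ++ [x]) ha⟩
    | pop2 _ hT => exact .inl ⟨T, rfl, .pop2 _ (by simpa [prependAll] using hT)⟩
    | pop _ hop hne =>
      rw [← List.append_assoc, List.append_singleton_inj] at hy
      obtain ⟨rfl, rfl⟩ := hy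
      by_cases hu : u = []
      · exact .inr ⟨hu, hop, by simp [hu]⟩
      · exact .inl ⟨_, by simp [prependAll], .pop T hop hu⟩
    | collapse _ _ a hk =>
      rw [← List.append_assoc, List.append_singleton_inj] at hy
      obtain ⟨rfl, rfl⟩ := hy
      exact .inl ⟨_, by simp [prependAll, List.map_take], .collapse T u a hk⟩
  · rintro (⟨T₁, rfl, h⟩ | ⟨rfl, hop, rfl⟩)
    · generalize hy : u ++ [x] = y at h ⊢
      cases h with
      | clone2 => simpa [prependAll] using OpEffect.clone2 (b := b) (prependAll w T) (w ++ y)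
      | push1 _ _ ha => simpa [prependAll] using OpEffect.push1 (prependAll w T) (w ++ y) ha
      | push2 _ _ ha => simpa [prependAll] using OpEffect.push2 (prependAll w T) (w ++ y) ha
      | pop2 _ hT => exact .pop2 _ (by simpa [prependAll] using hT)
      | @pop _ z _ v hop hne =>
        simpa [prependAll] using
          OpEffect.pop (b := b) (prependAll w T) (u := w ++ v) hop (by simp [hne])
      | @collapse _ v a k hk =>
        simpa [prependAll, List.map_take] using
          OpEffect.collapse (b := b) (prependAll w T) (w ++ v) a hk
    · exact .pop _ hop hw

theorem applyOp_prependAll_iff {b : A} {op : Op A} {w : Word A} {T t : Stack2 A} (hw : w ≠ [])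
    (hT : [] ∉ T) :
    applyOp b op (prependAll w T) = some t ↔
      (∃ T₁, t = prependAll w T₁ ∧ applyOp b op T = some T₁) ∨
        ∃ T₀ x, T = T₀ ++ [[x]] ∧ Pops op x ∧ t = prependAll w T₀ ++ [w] := by
  rcases List.eq_nil_or_concat' T with rfl | ⟨T, u, rfl⟩
  · simp [prependAll, applyOp_nil]
  rcases List.eq_nil_or_concat' u with rfl | ⟨u, x, rfl⟩
  · simp at hT
  rw [prependAll_append, prependAll_singleton, applyOp_snoc_iff, opEffect_prependAll_iff hw]
  simp only [applyOp_snoc_iff]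
  refine or_congr_right ⟨?_, ?_⟩
  · rintro ⟨rfl, hop, rfl⟩
    exact ⟨T, x, rfl, hop, rfl⟩
  · rintro ⟨T₀, y, h, hop, rfl⟩
    obtain ⟨rfl, hy⟩ := List.append_singleton_inj.1 h
    obtain ⟨rfl, rfl⟩ := List.append_singleton_inj.1 (hy.trans (List.nil_append [y]).symm)
    exact ⟨rfl, hop, rfl⟩

/-- A step of the system in which a return may be taken in one go: when `Pop₁` would empty the
topmost word, a pair in `R` gives the states before and after the removal of that word. The symbol
below the vanishing letter need not be known. -/
inductive ShortStep (S : CPS Q A Γ) (R : Set (Q × Q)) : Q × Stack2 A → Q × Stack2 A → Prop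
  | step {c d : Q × Stack2 A} (h : Step S c d) : ShortStep S R c d
  | ret {q q₀ q₁ : Q} {γ : Γ} {op : Op A} {T : Stack2 A} {x : Letter A} (hT : T ≠ [])
      (hΔ : (q, symOf x, γ, q₀, op) ∈ S.Δ) (hop : Pops op x) (hR : (q₀, q₁) ∈ R) :
      ShortStep S R (q, T ++ [[x]]) (q₁, T)

/-- The run `ρ` keeps the width above `N` before its end, and each time it arrives at a topmost
word `v` it removes that word later on. -/
structure Run.Drops {S : CPS Q A Γ} (ρ : Run S) (N : ℕ) (v : Word A) : Prop where
  lt_length : ∀ k < ρ.len, N < (ρ.stk k).length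
  exists_le : ∀ k ≤ ρ.len, ∀ s, ρ.stk k = s ++ [v] →
    ∃ m, k < m ∧ m ≤ ρ.len ∧ (ρ.stk m).length ≤ s.length

theorem Run.Drops.exists_cons {S : CPS Q A Γ} {ρ : Run S} {N : ℕ} {v : Word A}
    {c : Q × Stack2 A} (h : ρ.Drops N v) (hc : Step S c (ρ.cfg 0)) (hN : N < c.2.length)
    (hv : ∀ s, c.2 = s ++ [v] → ∃ m ≤ ρ.len, (ρ.stk m).length ≤ s.length) :
    ∃ τ : Run S, τ.cfg 0 = c ∧ τ.cfg τ.len = ρ.cfg ρ.len ∧ τ.Drops N v ∧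
      ∀ m ≤ ρ.len, ∃ m' ≤ τ.len, τ.stk m' = ρ.stk m := by
  obtain ⟨τ, hlen, h0, hτ⟩ := hc.exists_run_cons
  have hstk (k : ℕ) : τ.stk (k + 1) = ρ.stk k := congrArg Prod.snd (hτ k)
  refine ⟨τ, h0, by rw [hlen, hτ], ⟨fun k hk => ?_, fun k hk s hs => ?_⟩,
    fun m hm => ⟨m + 1, by omega, hstk m⟩⟩
  · cases k with
    | zero => rwa [Run.stk, h0]
    | succ k => exact hstk k ▸ h.lt_length k (by omega)
  · cases k with
    | zero =>
      rw [Run.stk, h0] at hs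
      obtain ⟨m, hm, hms⟩ := hv s hs
      exact ⟨m + 1, by omega, by omega, hstk m ▸ hms⟩
    | succ k =>
      obtain ⟨m, hkm, hm, hms⟩ := h.exists_le k (by omega) s (hstk k ▸ hs)
      exact ⟨m + 1, by omega, by omega, hstk m ▸ hms⟩

theorem Run.Drops.exists_append {S : CPS Q A Γ} {ρ : Run S} {N M : ℕ} {v : Word A}
    {c : Q × Stack2 A} (h : ρ.Drops N v) (hNM : N ≤ M) (hM : (ρ.stk 0).length ≤ M)
    (hc : ReachWhile S (M < ·.length) c (ρ.cfg 0)) :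
    ∃ τ : Run S, τ.cfg 0 = c ∧ τ.cfg τ.len = ρ.cfg ρ.len ∧ τ.Drops N v ∧
      ∃ m ≤ τ.len, (τ.stk m).length ≤ M := by
  induction hc using Relation.ReflTransGen.head_induction_on with
  | refl => exact ⟨ρ, rfl, rfl, h, 0, Nat.zero_le _, hM⟩
  | @head c d hcd _ ih =>
    obtain ⟨τ, rfl, hend, hτ, m, hm, hmM⟩ := ih
    obtain ⟨τ', h0, hend', hτ', hstk⟩ := hτ.exists_cons hcd.2 (hNM.trans_lt hcd.1) fun s hs => by
      have hwidth := hcd.1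
      simp only [hs, List.length_append, List.length_singleton] at hwidth
      exact ⟨m, hm, by omega⟩
    obtain ⟨m', hm', hmm'⟩ := hstk m hm
    exact ⟨τ', h0, hend'.trans hend, hτ', m', hm', hmm' ▸ hmM⟩

/-- Reachability by steps and `R`-shortcuts from stacks of width greater than `N`. -/
def ReachShort (S : CPS Q A Γ) (R : Set (Q × Q)) (N : ℕ) :
    Q × Stack2 A → Q × Stack2 A → Prop :=
  Relation.ReflTransGen fun c d => N < c.2.length ∧ ShortStep S R c d

theorem Run.Drops.exists_ret {S : CPS Q A Γ} {ρ : Run S} {N k : ℕ} {v : Word A} {s : Stack2 A}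
    (h : ρ.Drops N v) (hs : s ≠ []) (hv : ZeroLinks v) (hk : k ≤ ρ.len)
    (hks : ρ.stk k = s ++ [v]) :
    ∃ m, k < m ∧ m ≤ ρ.len ∧ ρ.stk m = s ∧ RetSeg ρ k m ∧
      ((ρ.cfg k).1, (ρ.cfg m).1) ∈ ExRet S v := by
  classical
  have hex := h.exists_le k hk s hks
  obtain ⟨hkm, hm, hdrop⟩ := Nat.find_spec hex
  have hwidth (l : ℕ) (hkl : k ≤ l) (hlm : l < Nat.find hex) : s.length < (ρ.stk l).length := by
    obtain rfl | hkl := hkl.eq_or_lt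
    · simp [hks]
    · by_contra! hl
      exact Nat.find_min hex hlm ⟨hkl, by omega, hl⟩
  obtain ⟨hms, hret⟩ := retSeg_of_length_le hs hv hks hkm.le hm hwidth hdrop
  refine ⟨_, hkm, hm, hms, hret, (mem_exRet_iff hs hv).2 ⟨⟨ρ.lab 0⟩, ?_⟩⟩
  have hreach := ρ.reachWhile (P := (s.length < ·.length)) hkm.le hm hwidth
  rwa [show ρ.cfg k = (_, s ++ [v]) from Prod.ext rfl hks,
    show ρ.cfg (Nat.find hex) = (_, s) from Prod.ext rfl hms] at hreach

theorem Run.drops_of_stk_ne {S : CPS Q A Γ} {ρ : Run S} {N : ℕ} {v w : Word A}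
    (hend : ρ.stk ρ.len = [w]) (hwv : w ≠ v) (hN : ∀ k < ρ.len, N < (ρ.stk k).length)
    (hv : ∀ k < ρ.len, ρ.stk k ≠ [v]) : ρ.Drops N v := by
  refine ⟨hN, fun k hk s hs => ?_⟩
  obtain rfl | hk := hk.eq_or_lt
  · rw [hend] at hs
    obtain ⟨-, h⟩ := List.append_singleton_inj.1 ((List.nil_append [w]).trans hs)
    exact absurd h hwv
  · have hne : s ≠ [] := by rintro rfl; exact hv k hk hs
    exact ⟨ρ.len, hk, le_rfl, by simpa [hend, Nat.one_le_iff_ne_zero] using hne⟩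

theorem Run.Drops.stk_ne {S : CPS Q A Γ} {ρ : Run S} {N k : ℕ} {v : Word A}
    (h : ρ.Drops N v) (hend : ρ.stk ρ.len ≠ []) (hk : k ≤ ρ.len) : ρ.stk k ≠ [v] := by
  intro hkv
  obtain ⟨m, -, hm, hzero⟩ := h.exists_le k hk [] hkv
  have hm0 : ρ.stk m = [] := by simpa using hzero
  obtain rfl | hm := hm.eq_or_lt
  · exact hend hm0
  · simpa [hm0] using h.lt_length m hm

theorem Run.Drops.reachShort {S : CPS Q A Γ} {ρ : Run S} {N i : ℕ} {w : Word A} {q : Q}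
    {T : Stack2 A} (h : ρ.Drops N w) (hw : w ≠ []) (hlink : ZeroLinks w) (hT : [] ∉ T)
    (hi : i ≤ ρ.len) (hstart : ρ.cfg i = (q, prependAll w T)) (hend : ρ.stk ρ.len ≠ []) :
    ∃ T', ρ.stk ρ.len = prependAll w T' ∧
      ReachShort S (ExRet S w) N (q, T) ((ρ.cfg ρ.len).1, T') := by
  induction hn : ρ.len - i using Nat.strong_induction_on generalizing i q T with
  | _ n ih =>
    obtain rfl | hi := hi.eq_or_lt
    · exact ⟨T, by rw [Run.stk, hstart], by rw [hstart]; exact .refl⟩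
    have hwidth : N < T.length := by
      simpa [Run.stk, hstart, length_prependAll] using h.lt_length i hi
    obtain ⟨a, hsym, hΔ, hop⟩ := ρ.ok i hi
    simp only [hstart, symS_prependAll w hT] at hsym hΔ hop
    obtain ⟨T₁, hT₁, hop'⟩ | ⟨T₀, x, rfl, hpop, hT₀⟩ := (applyOp_prependAll_iff hw hT).1 hop
    · obtain ⟨T', hT', hreach⟩ := ih _ (by omega) (nil_notMem_of_applyOp hop' hT) (by omega)
        (Prod.ext rfl hT₁) rfl
      have hstep : Step S (q, T) ((ρ.cfg (i + 1)).1, T₁) := ⟨_, _, a, hsym, hΔ, hop'⟩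
      exact ⟨T', hT', .head ⟨hwidth, .step hstep⟩ hreach⟩
    · have hT₀ne : T₀ ≠ [] := by
        rintro rfl
        exact h.stk_ne hend hi hT₀
      obtain ⟨m, him, hm, hms, -, hret⟩ :=
        h.exists_ret (by simpa [prependAll] using hT₀ne) hlink hi hT₀
      rw [symS_snoc] at hsym
      obtain rfl : symOf x = a := by simpa [symW] using hsym
      obtain ⟨T', hT', hreach⟩ := ih _ (by omega) (fun h => hT (List.mem_append_left _ h)) hm
        (Prod.ext rfl hms) rfl
      exact ⟨T', hT', .head ⟨hwidth, .ret hT₀ne hΔ hpop hret⟩ hreach⟩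

theorem ShortStep.nil_notMem {S : CPS Q A Γ} {R : Set (Q × Q)} {c d : Q × Stack2 A}
    (h : ShortStep S R c d) (hc : [] ∉ c.2) : [] ∉ d.2 := by
  cases h with
  | step h =>
    obtain ⟨op, hop⟩ := h.exists_applyOp
    exact nil_notMem_of_applyOp hop hc
  | ret => exact fun h => hc (List.mem_append_left _ h)

theorem Step.prependAll {S : CPS Q A Γ} {w : Word A} {c d : Q × Stack2 A} (h : Step S c d)
    (hw : w ≠ []) (hc : [] ∉ c.2) : Step S (c.1, prependAll w c.2) (d.1, prependAll w d.2) := by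
  obtain ⟨γ, op, a, hsym, hΔ, hop⟩ := h
  exact ⟨γ, op, a, by simpa only [symS_prependAll w hc] using hsym, hΔ,
    (applyOp_prependAll_iff hw hc).2 (.inl ⟨_, rfl, hop⟩)⟩

theorem Run.Drops.exists_shortStep {S : CPS Q A Γ} {ρ : Run S} {N : ℕ} {w : Word A}
    {c d : Q × Stack2 A} (h : ρ.Drops N w) (hw : w ≠ []) (hlink : ZeroLinks w) (hc : [] ∉ c.2)
    (hN : N < c.2.length) (hcd : ShortStep S (ExRet S w) c d)
    (hρ : ρ.cfg 0 = (d.1, prependAll w d.2)) :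
    ∃ τ : Run S, τ.cfg 0 = (c.1, prependAll w c.2) ∧ τ.cfg τ.len = ρ.cfg ρ.len ∧
      τ.Drops N w := by
  have hsnoc (s : Stack2 A) (hs : prependAll w c.2 = s ++ [w]) :
      ∃ m ≤ ρ.len, (ρ.stk m).length ≤ s.length := absurd hs (prependAll_ne_snoc hc)
  cases hcd with
  | step hstep =>
    obtain ⟨τ, h0, hend, hτ, -⟩ := h.exists_cons (c := (c.1, prependAll w c.2))
      (by rw [hρ]; exact hstep.prependAll hw hc) (by rwa [length_prependAll]) hsnoc
    exact ⟨τ, h0, hend, hτ⟩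
  | @ret q q₀ q₁ γ op T x hT hΔ hop hR =>
    have hne : prependAll w T ≠ [] := by simpa [prependAll] using hT
    have hret := ((mem_exRet_iff hne hlink).1 hR).2
    rw [← hρ, length_prependAll] at hret
    obtain ⟨τ, h0, hend, hτ, -⟩ := h.exists_append (M := T.length)
      (by simpa [Nat.lt_succ_iff] using hN) (by simp [Run.stk, hρ, length_prependAll]) hret
    have hstep : Step S (q, prependAll w (T ++ [[x]])) (q₀, prependAll w T ++ [w]) :=
      ⟨γ, op, symOf x, by simp [symS_prependAll w hc, symS_snoc, symW], hΔ,
        (applyOp_prependAll_iff hw hc).2 (.inr ⟨T, x, rfl, hop, rfl⟩)⟩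
    obtain ⟨τ', h0', hend', hτ', -⟩ := hτ.exists_cons (h0 ▸ hstep)
      (by rwa [length_prependAll]) fun s hs => absurd hs (prependAll_ne_snoc hc)
    exact ⟨τ', h0', hend'.trans hend, hτ'⟩

theorem exists_drops_iff {S : CPS Q A Γ} {N : ℕ} {w : Word A} {q q' : Q} {T T' : Stack2 A}
    (hw : w ≠ []) (hlink : ZeroLinks w) (hT : [] ∉ T) (hT' : T' ≠ []) :
    (∃ ρ : Run S, ρ.cfg 0 = (q, prependAll w T) ∧ ρ.cfg ρ.len = (q', prependAll w T') ∧
      ρ.Drops N w) ↔ Nonempty Γ ∧ ReachShort S (ExRet S w) N (q, T) (q', T') := by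
  constructor
  · rintro ⟨ρ, h0, hend, hρ⟩
    obtain ⟨T₁, hT₁, hreach⟩ := hρ.reachShort hw hlink hT (Nat.zero_le _) h0
      (by simpa [Run.stk, hend, prependAll] using hT')
    simp only [Run.stk, hend] at hT₁ hreach
    cases prependAll_injective w hT₁
    exact ⟨⟨ρ.lab 0⟩, hreach⟩
  · rintro ⟨_, h⟩
    suffices ∀ c, [] ∉ c.2 → ReachShort S (ExRet S w) N c (q', T') →
        ∃ ρ : Run S, ρ.cfg 0 = (c.1, prependAll w c.2) ∧
          ρ.cfg ρ.len = (q', prependAll w T') ∧ ρ.Drops N w from this _ hT h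
    intro c hc hreach
    induction hreach using Relation.ReflTransGen.head_induction_on with
    | refl =>
      obtain ⟨ρ, hlen, h0⟩ := exists_run_len_eq_zero S (q', prependAll w T')
      refine ⟨ρ, h0, by rw [hlen, h0], by simp [hlen], fun k hk s hs => ?_⟩
      obtain rfl : k = 0 := by omega
      rw [Run.stk, h0] at hs
      exact absurd hs (prependAll_ne_snoc hc)
    | head hcd _ ih =>
      obtain ⟨ρ, h0, hend, hρ⟩ := ih (hcd.2.nil_notMem hc)
      obtain ⟨τ, h0', hend', hτ⟩ := hρ.exists_shortStep hw hlink hc hcd.1 hcd.2 h0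
      exact ⟨τ, h0', hend'.trans hend, hτ⟩

/-! ### Returns and level-1 loops of a word with one more letter -/

theorem mem_exRet_snoc_iff {S : CPS Q A Γ} {w : Word A} {x : Letter A} (hw : w ≠ [])
    (hlink : ZeroLinks (w ++ [x])) {q q' : Q} :
    (q, q') ∈ ExRet S (w ++ [x]) ↔
      Nonempty Γ ∧ ReachShort S (ExRet S w) 1 (q, [[x], [x]]) (q', [[x]]) := by
  rw [mem_exRet_iff (s := [w ++ [x]]) (by simp) hlink,
    ← exists_drops_iff hw hlink.of_append (by simp) (by simp), ← exists_run_iff]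
  refine exists_congr fun ρ => and_congr_right fun _ => and_congr_right fun hend =>
    ⟨fun hwidth => ?_, Run.Drops.lt_length⟩
  refine Run.drops_of_stk_ne (w := w ++ [x]) (by rw [Run.stk, hend]) (by simp) hwidth ?_
  exact fun k hk hkw => by simpa [hkw] using hwidth k hk

theorem oneLoopSeg_iff_drops {S : CPS Q A Γ} {ρ : Run S} {w : Word A} {x : Letter A}
    {s : Stack2 A} (hw : w ≠ []) (hlink : ZeroLinks w) (hstart : ρ.stk 0 = [w ++ [x]])
    (hend : ρ.stk ρ.len = s ++ [w ++ [x]]) : OneLoopSeg ρ 0 ρ.len ↔ ρ.Drops 0 w := by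
  constructor
  · rintro ⟨-, -, s₀, u, -, hstart', -, hwidth, hret⟩
    obtain ⟨rfl, rfl⟩ : s₀ = [] ∧ u = w ++ [x] :=
      List.append_singleton_inj.1 (hstart'.symm.trans (hstart.trans (List.nil_append _).symm))
    refine ⟨fun k hk => hwidth k (Nat.zero_le k) hk.le, fun k hk t hkt => ?_⟩
    obtain ⟨m, hkm, hm, hseg⟩ := hret k (Nat.zero_le k) hk
      (by simpa [List.length_pos_iff] using hw) (by simp [hkt, top2])
    obtain ⟨-, -, -, hmt, -⟩ := (retShell_iff hkt hlink).1 hseg.retShell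
    exact ⟨m, hkm, hm, hmt ▸ le_rfl⟩
  · intro h
    have hne : ρ.stk ρ.len ≠ [] := by simp [hend]
    refine ⟨Nat.zero_le _, le_rfl, [], w ++ [x], s, hstart, hend, fun k _ hk => ?_,
      fun k _ hk _ htop => ?_⟩
    · obtain rfl | hk := hk.eq_or_lt
      · exact List.length_pos_iff.2 hne
      · exact h.lt_length k hk
    · obtain ⟨t, hkt⟩ := List.getLast?_eq_some_iff.1 htop
      rw [List.dropLast_concat] at hkt
      have ht : t ≠ [] := by rintro rfl; exact h.stk_ne hne hk hkt
      obtain ⟨m, hkm, hm, -, hseg, -⟩ := h.exists_ret ht hlink hk hkt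
      exact ⟨m, hkm, hm, hseg⟩

theorem mem_exOneLoop_snoc_iff {S : CPS Q A Γ} {w : Word A} {x : Letter A} (hw : w ≠ [])
    (hlink : ZeroLinks (w ++ [x])) {q q' : Q} :
    (q, q') ∈ ExOneLoop S (w ++ [x]) ↔
      Nonempty Γ ∧ ∃ T, ReachShort S (ExRet S w) 0 (q, [[x]]) (q', T ++ [[x]]) := by
  simp only [ExOneLoop, Set.mem_ofPred_eq, hlink.down0_eq]
  constructor
  · rintro ⟨ρ, s, h0, hend, hloop⟩
    have hdrops := (oneLoopSeg_iff_drops hw hlink.of_append (congrArg Prod.snd h0)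
      (congrArg Prod.snd hend)).1 hloop
    obtain ⟨T', hT', hreach⟩ := hdrops.reachShort (T := [[x]]) hw hlink.of_append (by simp)
      (Nat.zero_le _) h0 (by simp [Run.stk, hend])
    simp only [Run.stk, hend] at hT' hreach
    obtain ⟨T, U, rfl, -, hU⟩ := List.map_eq_append_iff.1 hT'.symm
    obtain rfl : U = [[x]] := prependAll_injective w hU
    exact ⟨⟨ρ.lab 0⟩, T, hreach⟩
  · rintro ⟨hΓ, T, hreach⟩
    obtain ⟨ρ, h0, hend, hdrops⟩ :=
      (exists_drops_iff hw hlink.of_append (by simp) (by simp)).2 ⟨hΓ, hreach⟩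
    rw [prependAll_append, prependAll_singleton] at hend
    exact ⟨ρ, prependAll w T, h0, hend, (oneLoopSeg_iff_drops hw hlink.of_append
      (congrArg Prod.snd h0) (congrArg Prod.snd hend)).2 hdrops⟩

/-! ### Loops -/

/-- The lowest word of `s` extends `w`. -/
def Above {A : Type} (w : Word A) (s : Stack2 A) : Prop :=
  ∃ u r, s = u :: r ∧ w <+: u

/-- The visiting condition for loops of the stack `[w]`: if `s` arises from `[w]` by removing
letters, then all removed letters have level 1. -/
def LoopGuard {A : Type} (w : Word A) (s : Stack2 A) : Prop :=
  ∀ x y, x ≠ [] → w = x ++ y → s = [x] → ∀ a ∈ y, lvlOf a = 1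

theorem above_singleton {A : Type} (w : Word A) : Above w [w] := ⟨w, [], rfl, List.prefix_rfl⟩

theorem not_above_singleton {A : Type} (w : Word A) (x : Letter A) : ¬ Above (w ++ [x]) [w] := by
  rintro ⟨u, r, h, hpre⟩
  obtain ⟨rfl, -⟩ := List.cons.inj h
  simpa using hpre.length_le

theorem Above.loopGuard {A : Type} {w : Word A} {s : Stack2 A} (h : Above w s) :
    LoopGuard w s := by
  rintro x y - rfl rfl
  obtain ⟨u, r, hur, hpre⟩ := h
  obtain ⟨rfl, -⟩ := List.cons.inj hur
  obtain rfl : y = [] := by simpa using hpre.length_le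
  simp

theorem LoopGuard.of_append_singleton {A : Type} {w : Word A} {x : Letter A} {s : Stack2 A}
    (h : LoopGuard (w ++ [x]) s) : LoopGuard w s := by
  rintro u y hu rfl rfl a ha
  exact h u (y ++ [x]) hu (List.append_assoc _ _ _) rfl a (List.mem_append_left _ ha)

theorem LoopGuard.append_singleton {A : Type} {w : Word A} {x : Letter A} {s : Stack2 A}
    (h : LoopGuard w s) (hx : lvlOf x = 1) : LoopGuard (w ++ [x]) s := by
  rintro u y hu hwy rfl a ha
  rcases List.eq_nil_or_concat' y with rfl | ⟨y, z, rfl⟩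
  · simp at ha
  · rw [← List.append_assoc, List.append_singleton_inj] at hwy
    obtain ⟨hwy, rfl⟩ := hwy
    obtain ha | ha := List.mem_append.1 ha
    · exact h u y hu hwy rfl a ha
    · rwa [List.mem_singleton.1 ha]

theorem iter_pop1_singleton_eq_some_iff {A : Type} {m : ℕ} {w : Word A} {t : Stack2 A} :
    iter pop1 m [w] = some t ↔
      ∃ x y, w = x ++ y ∧ y.length = m ∧ (m = 0 ∨ x ≠ []) ∧ t = [x] := by
  induction m generalizing w with
  | zero => simp [iter, eq_comm]
  | succ m ih =>
    have hpop (s : Stack2 A) :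
        pop1 [w] = some s ↔ ∃ v a, w = v ++ [a] ∧ v ≠ [] ∧ s = [v] :=
      pop1_snoc_eq_some_iff (s := [])
    simp only [iter, Option.bind_eq_some_iff, hpop]
    constructor
    · rintro ⟨_, ⟨v, a, rfl, hv, rfl⟩, h⟩
      obtain ⟨x, y, rfl, rfl, hx, rfl⟩ := ih.1 h
      refine ⟨x, y ++ [a], by simp, by simp, .inr ?_, rfl⟩
      rintro rfl
      simp_all
    · rintro ⟨x, y, rfl, hy, hx, rfl⟩
      obtain ⟨y, a, rfl⟩ := (List.eq_nil_or_concat' y).resolve_left (by rintro rfl; simp at hy)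
      refine ⟨[x ++ y], ⟨x ++ y, a, by simp, by simp_all, rfl⟩,
        ih.2 ⟨x, y, rfl, by simpa using hy, .inr (by simpa using hx), rfl⟩⟩

theorem loopSeg_iff {S : CPS Q A Γ} {ρ : Run S} {w : Word A} (hstart : ρ.stk 0 = [w])
    (hend : ρ.stk ρ.len = [w]) :
    LoopSeg ρ 0 ρ.len ↔ ∀ k < ρ.len, LoopGuard w (ρ.stk k) := by
  rw [LoopSeg, hstart]
  constructor
  · rintro ⟨-, -, -, -, h⟩ k hk x y hx rfl hkx a ha
    obtain ⟨y₁, y₂, rfl⟩ := List.append_of_mem ha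
    obtain ⟨t, ht, hlvl⟩ := h k (Nat.zero_le k) hk.le (y₁ ++ a :: y₂).length (by simp) [x]
      (iter_pop1_singleton_eq_some_iff.2 ⟨x, _, rfl, rfl, .inr hx, rfl⟩) hkx y₂.length
      (by simp; omega)
    have htake : iter pop1 y₂.length [x ++ (y₁ ++ a :: y₂)] = some [x ++ y₁ ++ [a]] :=
      iter_pop1_singleton_eq_some_iff.2 ⟨_, y₂, by simp, rfl, .inr (by simp), rfl⟩
    cases htake.symm.trans ht
    simpa [lvlS, top1] using hlvl
  · refine fun h => ⟨Nat.zero_le _, le_rfl, hend, by simp [pop2], ?_⟩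
    rintro k - hk m hm t ht hkt m' hm'
    obtain ⟨x, y, rfl, rfl, hx, rfl⟩ := iter_pop1_singleton_eq_some_iff.1 ht
    have hk : k < ρ.len := hk.lt_of_ne <| by
      rintro rfl
      obtain rfl : y = [] := by simpa [hend] using hkt
      exact hm.ne rfl
    obtain ⟨y₁, z, rfl, hz⟩ : ∃ y₁ z, y = y₁ ++ z ∧ z.length = m' + 1 :=
      ⟨_, _, (List.take_append_drop (y.length - (m' + 1)) y).symm, by simp; omega⟩
    obtain ⟨a, y₂, rfl⟩ := List.exists_cons_of_length_eq_add_one hz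
    obtain rfl : y₂.length = m' := by simpa using hz
    refine ⟨[x ++ y₁ ++ [a]],
      iter_pop1_singleton_eq_some_iff.2 ⟨_, y₂, by simp, rfl, .inr (by simp), rfl⟩, ?_⟩
    simpa [lvlS, top1] using h k hk x _ (hx.resolve_left hm.ne') rfl hkt a (by simp)

theorem Above.step {b : A} {op : Op A} {w : Word A} {s t : Stack2 A} (h : Above w s)
    (hop : applyOp b op s = some t) :
    Above w t ∨ ∃ v x, w = v ++ [x] ∧ v ≠ [] ∧ s = [w] ∧ t = [v] := by
  obtain ⟨u, r, rfl, hwu⟩ := h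
  obtain ⟨k, hk, hk0, -⟩ | ⟨u', r', rfl, hu', hstep, -⟩ := applyOp_append_cons (s := []) hop
  · exact absurd hk hk0.not_gt
  cases hstep with
  | refl => exact .inl ⟨u, r', rfl, hwu⟩
  | push1 => exact .inl ⟨_, r', rfl, hwu.trans (List.prefix_append _ _)⟩
  | push2 => exact .inl ⟨_, r', rfl, hwu.trans (List.prefix_append _ _)⟩
  | pop x hne =>
    obtain rfl | hpre := List.prefix_concat_iff.1 hwu
    · obtain ⟨rfl, rfl⟩ := hu'.resolve_left (by simp)
      exact .inr ⟨u', x, rfl, hne, rfl, rfl⟩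
    · exact .inl ⟨u', r', rfl, hpre⟩

theorem eq_singleton_of_above_of_not_above {b : A} {op : Op A} {w : Word A} {x : Letter A}
    {s t : Stack2 A} (hop : applyOp b op s = some t) (hs : ¬ Above (w ++ [x]) s)
    (ht : Above (w ++ [x]) t) : s = [w] ∧ t = [w ++ [x]] := by
  obtain _ | ⟨u, r⟩ := s
  · simp [applyOp_nil] at hop
  have hu : ¬ w ++ [x] <+: u := fun h => hs ⟨u, r, rfl, h⟩
  obtain ⟨k, hk, hk0, -⟩ | ⟨u', r', rfl, hu', hstep, -⟩ := applyOp_append_cons (s := []) hop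
  · exact absurd hk hk0.not_gt
  obtain ⟨_, _, heq, hpre⟩ := ht
  obtain ⟨rfl, -⟩ := List.cons.inj heq
  have hconcat (y : Letter A) (hy : u' = u ++ [y]) : [u] = [w] ∧ [u'] = [w ++ [x]] := by
    subst hy
    obtain h | h := List.prefix_concat_iff.1 hpre
    · obtain ⟨rfl, rfl⟩ := List.append_singleton_inj.1 h
      exact ⟨rfl, rfl⟩
    · exact absurd h hu
  cases hstep with
  | refl => exact absurd hpre hu
  | push1 =>
    obtain ⟨rfl, rfl⟩ := hu'.resolve_left (by simp)
    exact hconcat _ rfl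
  | push2 =>
    obtain ⟨rfl, rfl⟩ := hu'.resolve_left (by simp)
    exact hconcat _ rfl
  | pop y hne => exact absurd (hpre.trans (List.prefix_append _ _)) hu

theorem mem_exLoop_iff {S : CPS Q A Γ} {w : Word A} (hw : ZeroLinks w) {q q' : Q} :
    (q, q') ∈ ExLoop S w ↔
      Nonempty Γ ∧ ReachWhile S (LoopGuard w) (q, [w]) (q', [w]) := by
  rw [← exists_run_iff]
  simp only [ExLoop, Set.mem_ofPred_eq, hw.down0_eq]
  exact exists_congr fun ρ => and_congr_right fun h0 => and_congr_right fun hend =>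
    loopSeg_iff (congrArg Prod.snd h0) (congrArg Prod.snd hend)

/-! ### High loops -/

theorem Run.above_of_stk_ne {S : CPS Q A Γ} {ρ : Run S} {w : Word A} {x : Letter A}
    (hstart : ρ.stk 0 = [w ++ [x]]) (hne : ∀ k ≤ ρ.len, ρ.stk k ≠ [w]) {k : ℕ}
    (hk : k ≤ ρ.len) : Above (w ++ [x]) (ρ.stk k) := by
  induction k with
  | zero => exact hstart ▸ above_singleton _
  | succ k ih =>
    obtain ⟨op, hop⟩ := (ρ.step hk).exists_applyOp
    refine ((ih (by omega)).step hop).resolve_right ?_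
    rintro ⟨v, y, heq, -, -, hv⟩
    obtain ⟨rfl, -⟩ := List.append_singleton_inj.1 heq
    exact hne _ hk hv

theorem highLoopSeg_iff_above {S : CPS Q A Γ} {ρ : Run S} {w : Word A} {x : Letter A}
    (hw : w ≠ []) (hstart : ρ.stk 0 = [w ++ [x]]) (hend : ρ.stk ρ.len = [w ++ [x]]) :
    HighLoopSeg ρ 0 ρ.len ↔ ∀ k < ρ.len, Above (w ++ [x]) (ρ.stk k) := by
  have hpop : pop1 [w ++ [x]] = some [w] := (pop1_snoc_eq_some_iff (s := [])).2 ⟨w, x, rfl, hw, rfl⟩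
  simp only [HighLoopSeg, loopSeg_iff hstart hend, hstart, hpop, Option.some_inj, forall_eq']
  refine ⟨fun h k hk => Run.above_of_stk_ne hstart (fun k => h.2 k k.zero_le) hk.le,
    fun h => ⟨fun k hk => (h k hk).loopGuard, fun k _ hk hkw => ?_⟩⟩
  obtain rfl | hk := hk.eq_or_lt
  · simp [hend] at hkw
  · exact not_above_singleton w x (hkw ▸ h k hk)

theorem highLoopSeg_iff_drops {S : CPS Q A Γ} {ρ : Run S} {w : Word A} {x : Letter A}
    (hw : w ≠ []) (hstart : ρ.stk 0 = [w ++ [x]]) (hend : ρ.stk ρ.len = [w ++ [x]]) :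
    HighLoopSeg ρ 0 ρ.len ↔ ρ.Drops 0 w := by
  rw [highLoopSeg_iff_above hw hstart hend]
  constructor
  · refine fun h => Run.drops_of_stk_ne hend (by simp) (fun k hk => ?_) fun k hk hkw => ?_
    · obtain ⟨u, r, hur, -⟩ := h k hk
      simp [hur]
    · exact not_above_singleton w x (hkw ▸ h k hk)
  · exact fun h k hk =>
      Run.above_of_stk_ne hstart (fun k hk => h.stk_ne (by simp [hend]) hk) hk.le

theorem mem_exHLoop_snoc_iff_above {S : CPS Q A Γ} {w : Word A} {x : Letter A} (hw : w ≠ [])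
    (hlink : ZeroLinks (w ++ [x])) {q q' : Q} :
    (q, q') ∈ ExHLoop S (w ++ [x]) ↔
      Nonempty Γ ∧ ReachWhile S (Above (w ++ [x])) (q, [w ++ [x]]) (q', [w ++ [x]]) := by
  rw [← exists_run_iff]
  simp only [ExHLoop, Set.mem_ofPred_eq, hlink.down0_eq]
  exact exists_congr fun ρ => and_congr_right fun h0 => and_congr_right fun hend =>
    highLoopSeg_iff_above hw (congrArg Prod.snd h0) (congrArg Prod.snd hend)

theorem mem_exHLoop_snoc_iff {S : CPS Q A Γ} {w : Word A} {x : Letter A} (hw : w ≠ [])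
    (hlink : ZeroLinks (w ++ [x])) {q q' : Q} :
    (q, q') ∈ ExHLoop S (w ++ [x]) ↔
      Nonempty Γ ∧ ReachShort S (ExRet S w) 0 (q, [[x]]) (q', [[x]]) := by
  rw [← exists_drops_iff hw hlink.of_append (by simp) (by simp)]
  simp only [ExHLoop, Set.mem_ofPred_eq, hlink.down0_eq]
  exact exists_congr fun ρ => and_congr_right fun h0 => and_congr_right fun hend =>
    highLoopSeg_iff_drops hw (congrArg Prod.snd h0) (congrArg Prod.snd hend)

/-! ### Low loops -/

theorem Step.exists_run_snoc {S : CPS Q A Γ} {ρ : Run S} {d : Q × Stack2 A}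
    (h : Step S (ρ.cfg ρ.len) d) :
    ∃ τ : Run S, τ.len = ρ.len + 1 ∧ τ.cfg (ρ.len + 1) = d ∧ ∀ k ≤ ρ.len, τ.cfg k = ρ.cfg k := by
  obtain ⟨γ, op, h⟩ := h
  refine ⟨⟨ρ.len + 1, Function.update ρ.cfg (ρ.len + 1) d, Function.update ρ.lab ρ.len γ,
    Function.update ρ.op ρ.len op, fun i hi => ?_⟩, rfl, Function.update_self .., fun k hk =>
    Function.update_of_ne (by omega) ..⟩
  obtain rfl | hi := (Nat.lt_succ_iff.1 hi).eq_or_lt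
  · simpa using h
  · simpa [Function.update_of_ne, hi.ne, (Nat.lt_succ_of_lt hi).ne] using ρ.ok i hi

theorem ReachWhile.exists_run_cons_snoc [Nonempty Γ] {S : CPS Q A Γ} {P : Stack2 A → Prop}
    {c c' d d' : Q × Stack2 A} (h : ReachWhile S P c' d') (hc : Step S c c') (hd : Step S d' d) :
    ∃ (ρ : Run S) (n : ℕ), ρ.len = n + 2 ∧ ρ.cfg 0 = c ∧ ρ.cfg 1 = c' ∧ ρ.cfg (n + 1) = d' ∧
      ρ.cfg (n + 2) = d ∧ ∀ k < n, P (ρ.stk (k + 1)) := by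
  obtain ⟨ρ, rfl, rfl, hP⟩ := exists_run_iff.2 ⟨‹Nonempty Γ›, h⟩
  obtain ⟨ρ', hlen', hend, hρ'⟩ := hd.exists_run_snoc
  rw [← hρ' 0 (Nat.zero_le _)] at hc
  obtain ⟨τ, hlen, h0, hτ⟩ := hc.exists_run_cons
  refine ⟨τ, ρ.len, by omega, h0, by rw [hτ, hρ' 0 (Nat.zero_le _)], by rw [hτ, hρ' _ le_rfl],
    by rw [hτ, hend], fun k hk => ?_⟩
  rw [Run.stk, hτ, hρ' k hk.le]
  exact hP k hk

theorem LoopGuard.lvlOf_eq_one {A : Type} {w : Word A} {x : Letter A} (hw : w ≠ [])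
    (h : LoopGuard (w ++ [x]) [w]) : lvlOf x = 1 :=
  h w [x] hw rfl rfl x (List.mem_singleton_self x)

theorem mem_exLLoop_snoc_iff {S : CPS Q A Γ} {w : Word A} {x : Letter A} (hw : w ≠ [])
    (hlink : ZeroLinks (w ++ [x])) {q q' : Q} :
    (q, q') ∈ ExLLoop S (w ++ [x]) ↔
      lvlOf x = 1 ∧ ∃ q₁ q₂, Step S (q, [w ++ [x]]) (q₁, [w]) ∧ (q₁, q₂) ∈ ExLoop S w ∧
        Step S (q₂, [w]) (q', [w ++ [x]]) := by
  have hpop : pop1 [w ++ [x]] = some [w] := (pop1_snoc_eq_some_iff (s := [])).2 ⟨w, x, rfl, hw, rfl⟩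
  simp only [ExLLoop, Set.mem_ofPred_eq, hlink.down0_eq, mem_exLoop_iff hlink.of_append]
  constructor
  · rintro ⟨ρ, h0, hend, hloop, hpos, hlow⟩
    have hstart : ρ.stk 0 = [w ++ [x]] := congrArg Prod.snd h0
    simp only [hstart, hpop, Option.some_inj, exists_eq_left', Nat.zero_add] at hlow
    have hlen : 1 < ρ.len := lt_of_le_of_ne hpos fun h => by
      have hone : ρ.stk 1 = [w ++ [x]] := by rw [h]; exact congrArg Prod.snd hend
      simp [hlow.1] at hone
    have hguard := (loopSeg_iff hstart (congrArg Prod.snd hend)).1 hloop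
    have hfirst : ρ.cfg 1 = ((ρ.cfg 1).1, [w]) := Prod.ext rfl hlow.1
    have hlast : ρ.cfg (ρ.len - 1) = ((ρ.cfg (ρ.len - 1)).1, [w]) := Prod.ext rfl hlow.2
    refine ⟨(hlow.1 ▸ hguard 1 hlen).lvlOf_eq_one hw, (ρ.cfg 1).1, (ρ.cfg (ρ.len - 1)).1, ?_,
      ⟨⟨ρ.lab 0⟩, ?_⟩, ?_⟩
    · exact h0 ▸ hfirst ▸ ρ.step hpos
    · rw [← hfirst, ← hlast]
      exact (ρ.reachWhile (by omega) (by omega) fun k _ hk => hguard k (by omega)).mono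
        fun _ => LoopGuard.of_append_singleton
    · rw [← hlast, ← hend]
      simpa [Nat.sub_add_cancel hpos] using ρ.step (i := ρ.len - 1) (by omega)
  · rintro ⟨hx, q₁, q₂, hfirst, ⟨hΓ, hreach⟩, hlast⟩
    obtain ⟨ρ, n, hlen, h0, h1, hpred, hend, hguard⟩ := hreach.exists_run_cons_snoc hfirst hlast
    rw [← hlen] at hend
    have hstart : ρ.stk 0 = [w ++ [x]] := congrArg Prod.snd h0
    refine ⟨ρ, h0, hend, (loopSeg_iff hstart (congrArg Prod.snd hend)).2 fun k hk => ?_,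
      by omega, [w], hstart ▸ hpop, congrArg Prod.snd h1, ?_⟩
    · obtain _ | k := k
      · exact hstart ▸ (above_singleton _).loopGuard
      · obtain rfl | hk := (show k ≤ n by omega).eq_or_lt
        · rw [Run.stk, hpred]
          exact (above_singleton w).loopGuard.append_singleton hx
        · exact (hguard k hk).append_singleton hx
    · rw [hlen]
      exact congrArg Prod.snd hpred

theorem step_pop_iff {S : CPS Q A Γ} {w : Word A} {x : Letter A} (hw : w ≠ []) {q q' : Q} :
    Step S (q, [w ++ [x]]) (q', [w]) ↔
      ∃ γ op, (q, symOf x, γ, q', op) ∈ S.Δ ∧ Pops op x := by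
  have hop (op : Op A) : applyOp S.bot op [w ++ [x]] = some [w] ↔ Pops op x := by
    rw [← List.nil_append [w ++ [x]], applyOp_snoc_iff]
    refine ⟨fun h => ?_, fun h => .pop [] h hw⟩
    generalize hu : w ++ [x] = u at h
    generalize ht : [w] = t at h
    cases h with
    | collapse _ _ _ hk =>
      rw [List.nil_append, List.take_of_length_le hk] at ht
      simp_all
    | _ => simp_all
  have hsym : symS [w ++ [x]] = some (symOf x) := by simp [symS, top1]
  simp [Step, Trans, TransOp, hsym, hop]

theorem step_push_iff {S : CPS Q A Γ} {w : Word A} {a : A} {q q' : Q} :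
    Step S (q, [w]) (q', [w ++ [Sum.inl a]]) ↔
      ∃ c γ, symW w = some c ∧ (q, c, γ, q', .push1 a) ∈ S.Δ ∧ a ≠ S.bot := by
  have hop (op : Op A) :
      applyOp S.bot op [w] = some [w ++ [Sum.inl a]] ↔ op = .push1 a ∧ a ≠ S.bot := by
    rw [← List.nil_append [w], applyOp_snoc_iff]
    refine ⟨fun h => ?_, ?_⟩
    · generalize ht : [w ++ [Sum.inl a]] = t at h
      cases h with
      | collapse _ _ _ hk =>
        rw [List.nil_append, List.take_of_length_le hk] at ht
        simp at ht
      | _ => simp_all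
    · rintro ⟨rfl, ha⟩
      exact .push1 [] w ha
  have hsym : symS [w] = symW w := symS_snoc [] w
  simp only [Step, Trans, TransOp, hsym, hop]
  constructor
  · rintro ⟨γ, _, c, hc, hΔ, rfl, ha⟩
    exact ⟨c, γ, hc, hΔ, ha⟩
  · rintro ⟨c, γ, hc, hΔ, ha⟩
    exact ⟨γ, _, c, hc, hΔ, rfl, ha⟩

/-! ### Loops decompose into high and low loops -/

theorem ReachWhile.exists_reflTransGen [Nonempty Γ] {S : CPS Q A Γ} {w : Word A} {x : Letter A}
    (hw : w ≠ []) (hlink : ZeroLinks (w ++ [x])) {c : Q × Stack2 A} {q' : Q}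
    (h : ReachWhile S (LoopGuard (w ++ [x])) c (q', [w ++ [x]])) :
    let E := fun p p' => (p, p') ∈ ExHLoop S (w ++ [x]) ∪ ExLLoop S (w ++ [x])
    (Above (w ++ [x]) c.2 → ∃ p, ReachWhile S (Above (w ++ [x])) c (p, [w ++ [x]]) ∧
      Relation.ReflTransGen E p q') ∧
    (¬ Above (w ++ [x]) c.2 → ∃ p p', ReachWhile S (LoopGuard w) c (p, [w]) ∧
      Step S (p, [w]) (p', [w ++ [x]]) ∧ Relation.ReflTransGen E p' q') := by
  intro E
  induction h using Relation.ReflTransGen.head_induction_on with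
  | refl => exact ⟨fun _ => ⟨q', .refl, .refl⟩, fun h => absurd (above_singleton _) h⟩
  | @head c c' hc hrest ih =>
    obtain ⟨p, s⟩ := c
    obtain ⟨p', s'⟩ := c'
    obtain ⟨hguard, hstep⟩ := hc
    obtain ⟨op, hop⟩ := hstep.exists_applyOp
    constructor
    · intro hs
      obtain hs' | ⟨_, _, heq, -, rfl, rfl⟩ := hs.step hop
      · obtain ⟨p₁, hreach, hE⟩ := ih.1 hs'
        exact ⟨p₁, .head ⟨hs, hstep⟩ hreach, hE⟩
      · obtain ⟨rfl, rfl⟩ := List.append_singleton_inj.1 heq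
        obtain ⟨p₁, p₂, hreach, hpush, hE⟩ := ih.2 (not_above_singleton w x)
        have hx : lvlOf x = 1 := by
          obtain heq | ⟨_, ⟨hw', -⟩, -⟩ := hrest.cases_head
          · simp at heq
          · exact hw'.lvlOf_eq_one hw
        have hlow : E p p₂ := .inr <| (mem_exLLoop_snoc_iff hw hlink).2
          ⟨hx, p', p₁, hstep, (mem_exLoop_iff hlink.of_append).2 ⟨‹_›, hreach⟩, hpush⟩
        exact ⟨p, .refl, .head hlow hE⟩
    · intro hs
      by_cases hs' : Above (w ++ [x]) s'
      · obtain ⟨rfl, rfl⟩ := eq_singleton_of_above_of_not_above hop hs hs'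
        obtain ⟨p₁, hreach, hE⟩ := ih.1 hs'
        have hhigh : E p' p₁ := .inl <| (mem_exHLoop_snoc_iff_above hw hlink).2 ⟨‹_›, hreach⟩
        exact ⟨p, p', .refl, hstep, .head hhigh hE⟩
      · obtain ⟨p₁, p₂, hreach, hpush, hE⟩ := ih.2 hs'
        exact ⟨p₁, p₂, .head ⟨hguard.of_append_singleton, hstep⟩ hreach, hpush, hE⟩

theorem mem_exLoop_snoc_iff {S : CPS Q A Γ} {w : Word A} {x : Letter A} (hw : w ≠ [])
    (hlink : ZeroLinks (w ++ [x])) {q q' : Q} :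
    (q, q') ∈ ExLoop S (w ++ [x]) ↔ Nonempty Γ ∧ Relation.ReflTransGen
      (fun p p' => (p, p') ∈ ExHLoop S (w ++ [x]) ∪ ExLLoop S (w ++ [x])) q q' := by
  rw [mem_exLoop_iff hlink]
  refine and_congr_right fun hΓ => ⟨fun h => ?_, fun h => ?_⟩
  · obtain ⟨p, hreach, hE⟩ := (h.exists_reflTransGen hw hlink).1 (above_singleton _)
    exact .head (.inl <| (mem_exHLoop_snoc_iff_above hw hlink).2 ⟨hΓ, hreach⟩) hE
  · induction h with
    | refl => exact .refl
    | tail _ hE ih =>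
      refine ih.trans ((mem_exLoop_iff hlink).1 ?_).2
      obtain ⟨ρ, h0, hend, hloop⟩ | ⟨ρ, h0, hend, hloop⟩ := hE
      · exact ⟨ρ, h0, hend, hloop.1⟩
      · exact ⟨ρ, h0, hend, hloop.1⟩

/-! ### Words occurring in stacks -/

/-- The symbol `b` occurs in `w` at the first position and nowhere else. The empty word is
admitted, so that prefixes inherit the property. -/
def Bottomed {A : Type} (b : A) (w : Word A) : Prop :=
  ∀ u x, u ++ [x] <+: w → (symOf x = b ↔ u = [])

theorem Bottomed.of_prefix {A : Type} {b : A} {v w : Word A} (hw : Bottomed b w) (h : v <+: w) :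
    Bottomed b v :=
  fun u x hu => hw u x (hu.trans h)

theorem Bottomed.concat {A : Type} {b : A} {w : Word A} {x : Letter A} (hw : Bottomed b w)
    (hne : w ≠ []) (hx : symOf x ≠ b) : Bottomed b (w ++ [x]) := by
  intro u y h
  obtain h | h := List.prefix_concat_iff.1 h
  · obtain ⟨rfl, rfl⟩ := List.append_singleton_inj.1 h
    simp [hne, hx]
  · exact hw u y h

theorem Bottomed.down0 {A : Type} {b : A} {w : Word A} (hw : Bottomed b w) :
    Bottomed b (down0 w) := by
  rintro u x ⟨r, hr⟩
  obtain ⟨ux, r, rfl, hux, -⟩ := List.map_eq_append_iff.1 hr.symm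
  obtain ⟨u, y, rfl, rfl, hy⟩ := List.map_eq_append_iff.1 hux
  obtain ⟨y, rfl, rfl⟩ := List.map_eq_singleton_iff.1 hy
  have := hw u y (List.prefix_append _ _)
  obtain y | ⟨y, k⟩ := y <;> simpa [symOf] using this

theorem WordStep.bottomed {A : Type} {b : A} {n : ℕ} {u v : Word A} (h : WordStep b n u v)
    (hne : u ≠ []) (hu : Bottomed b u) : Bottomed b v := by
  cases h with
  | refl => exact hu
  | push1 _ ha => exact hu.concat hne ha
  | push2 _ ha => exact hu.concat hne ha
  | pop => exact hu.of_prefix (List.prefix_append _ _)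

theorem IsStack.bottomed {b : A} {s : Stack2 A} (hs : IsStack b s) {w : Word A} (hw : w ∈ s) :
    w ≠ [] ∧ Bottomed b w := by
  induction hs generalizing w with
  | base =>
    obtain rfl : w = [Sum.inl b] := by simpa [bottom2] using hw
    refine ⟨by simp, fun u x h => ?_⟩
    obtain ⟨rfl, rfl⟩ : u = [] ∧ x = Sum.inl b := by
      simpa [List.append_eq_singleton_iff] using List.prefix_concat_iff (l₂ := []).1 h
    simp [symOf]
  | step op _ hop ih =>
    obtain ⟨u, hu, n, huw⟩ := exists_wordStep_of_applyOp hop hw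
    exact ⟨huw.ne_nil (ih hu).1, huw.bottomed (ih hu).1 (ih hu).2⟩

/-! ### The automaton -/

theorem exists_moore_of_congr {α ω τ : Type} [Finite τ] {P D : Set (List α)} (f : List α → τ)
    (out : List α → ω) (hP : ∀ u a, u ++ [a] ∈ P → u ∈ P) (hDP : D ⊆ P)
    (hf : ∀ u v a, u ++ [a] ∈ P → v ++ [a] ∈ P → f u = f v → f (u ++ [a]) = f (v ++ [a]))
    (hout : ∀ u ∈ D, ∀ v ∈ D, f u = f v → out u = out v) :
    ∃ M : Moore α ω, Nat.card M.St = Nat.card τ ∧ ∀ w ∈ D, M.output w = out w := by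
  have hstep (t : τ) (a : α) : ∃ t', ∀ u, u ++ [a] ∈ P → f u = t → f (u ++ [a]) = t' := by
    by_cases h : ∃ v, v ++ [a] ∈ P ∧ f v = t
    · obtain ⟨v, hv, rfl⟩ := h
      exact ⟨f (v ++ [a]), fun u hu => hf u v a hu hv⟩
    · exact ⟨t, fun u hu hut => absurd ⟨u, hu, hut⟩ h⟩
  have hvalue (t : τ) : ∃ o, ∀ u ∈ D, f u = t → out u = o := by
    by_cases h : ∃ v ∈ D, f v = t
    · obtain ⟨v, hv, rfl⟩ := h
      exact ⟨out v, fun u hu => hout u hu v hv⟩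
    · exact ⟨out [], fun u hu hut => absurd ⟨u, hu, hut⟩ h⟩
  choose step hstep using hstep
  choose value hvalue using hvalue
  have hfoldl (w : List α) (hw : w ∈ P) : w.foldl step (f []) = f w := by
    induction w using List.reverseRecOn with
    | nil => rfl
    | append_singleton w a ih =>
      rw [List.foldl_append, ih (hP w a hw)]
      exact (hstep (f w) a w hw rfl).symm
  refine ⟨⟨τ, ‹_›, f [], step, value⟩, rfl, fun w hw => ?_⟩
  rw [hvalue (f w) w hw rfl, Moore.output, hfoldl w (hDP hw)]

/-- The output of the automaton on `w↓₀`. -/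
def loopInfo (S : CPS Q A Γ) (w : Word A) :
    Set (Q × Q) × Set (Q × Q) × Set (Q × Q) × Set (Q × Q) × Set (Q × Q) × Option A × Option ℕ :=
  (ExRet S w, ExLoop S w, ExHLoop S w, ExLLoop S w, ExOneLoop S w, symW w, lvlW w)

theorem loopInfo_down0 (S : CPS Q A Γ) (w : Word A) : loopInfo S (down0 w) = loopInfo S w := by
  have hsym : symW (down0 w) = symW w := by
    rw [symW, symW, down0, List.getLast?_map, Option.map_map]
    congr 1
    ext (x | x) <;> rfl
  have hlvl : lvlW (down0 w) = lvlW w := by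
    rw [lvlW, lvlW, down0, List.getLast?_map, Option.map_map]
    congr 1
    ext (x | x) <;> rfl
  simp only [loopInfo, ExRet, ExLoop, ExHLoop, ExLLoop, ExOneLoop, (zeroLinks_down0 w).down0_eq,
    hsym, hlvl]

theorem loopInfo_concat_congr {S : CPS Q A Γ} {u v : Word A} {x : Letter A} (hu : u ≠ [])
    (hv : v ≠ []) (hux : ZeroLinks (u ++ [x])) (hvx : ZeroLinks (v ++ [x]))
    (hret : ExRet S u = ExRet S v) (hloop : ExLoop S u = ExLoop S v) (hsym : symW u = symW v) :
    loopInfo S (u ++ [x]) = loopInfo S (v ++ [x]) := by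
  have hExRet : ExRet S (u ++ [x]) = ExRet S (v ++ [x]) := by
    ext ⟨q, q'⟩
    rw [mem_exRet_snoc_iff hu hux, mem_exRet_snoc_iff hv hvx, hret]
  have hExHLoop : ExHLoop S (u ++ [x]) = ExHLoop S (v ++ [x]) := by
    ext ⟨q, q'⟩
    rw [mem_exHLoop_snoc_iff hu hux, mem_exHLoop_snoc_iff hv hvx, hret]
  have hExOneLoop : ExOneLoop S (u ++ [x]) = ExOneLoop S (v ++ [x]) := by
    ext ⟨q, q'⟩
    rw [mem_exOneLoop_snoc_iff hu hux, mem_exOneLoop_snoc_iff hv hvx, hret]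
  have hExLLoop : ExLLoop S (u ++ [x]) = ExLLoop S (v ++ [x]) := by
    ext ⟨q, q'⟩
    rw [mem_exLLoop_snoc_iff hu hux, mem_exLLoop_snoc_iff hv hvx, hloop]
    obtain a | ⟨a, k⟩ := x
    · simp only [step_pop_iff hu, step_pop_iff hv, step_push_iff, hsym]
    · simp [lvlOf]
  have hExLoop : ExLoop S (u ++ [x]) = ExLoop S (v ++ [x]) := by
    ext ⟨q, q'⟩
    rw [mem_exLoop_snoc_iff hu hux, mem_exLoop_snoc_iff hv hvx, hExHLoop, hExLLoop]
  simp [loopInfo, hExRet, hExLoop, hExHLoop, hExLLoop, hExOneLoop, symW, lvlW]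

/-- The state of the automaton after reading a word `w` with `w↓₀ = w`: the returns and loops of
`Pop₁(w)`, the topmost symbols of `Pop₁(w)` and `w`, and whether `w` has level 2. The symbol of
the empty word is taken to be `⊥`. -/
def summary (S : CPS Q A Γ) (w : Word A) : Set (Q × Q) × Set (Q × Q) × A × A × Bool :=
  (ExRet S w.dropLast, ExLoop S w.dropLast, (symW w.dropLast).getD S.bot, (symW w).getD S.bot,
    decide (lvlW w = some 2))

theorem card_summary (Q A : Type) [Fintype Q] [Fintype A] :
    Nat.card (Set (Q × Q) × Set (Q × Q) × A × A × Bool) =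
      2 ^ (Fintype.card Q * Fintype.card Q) * 2 ^ (Fintype.card Q * Fintype.card Q) *
        Fintype.card A ^ 2 * 2 := by
  simp only [Nat.card_eq_fintype_card, Fintype.card_prod, Fintype.card_set, Fintype.card_bool]
  ring

theorem summary_concat (S : CPS Q A Γ) (w : Word A) (x : Letter A) :
    summary S (w ++ [x]) =
      (ExRet S w, ExLoop S w, (symW w).getD S.bot, symOf x, decide (lvlOf x = 2)) := by
  simp [summary, symW, lvlW]

theorem ZeroLinks.letter_eq {A : Type} {u v : Word A} {x y : Letter A}
    (hux : ZeroLinks (u ++ [x])) (hvy : ZeroLinks (v ++ [y])) (hsym : symOf x = symOf y)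
    (hlvl : lvlOf x = 2 ↔ lvlOf y = 2) : x = y := by
  obtain a | ⟨a, k⟩ := x <;> obtain b | ⟨b, l⟩ := y
  · exact congrArg Sum.inl hsym
  · simp [lvlOf] at hlvl
  · simp [lvlOf] at hlvl
  · rw [hux a k (by simp), hvy b l (by simp)]
    exact congrArg (fun c => Sum.inr (c, 0)) hsym

theorem symW_eq_of_getD_eq {A : Type} {u v : Word A} {b : A} (hu : u ≠ []) (hv : v ≠ [])
    (h : (symW u).getD b = (symW v).getD b) : symW u = symW v := by
  obtain ⟨u, x, rfl⟩ := (List.eq_nil_or_concat' u).resolve_left hu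
  obtain ⟨v, y, rfl⟩ := (List.eq_nil_or_concat' v).resolve_left hv
  simpa [symW] using h

theorem loopInfo_eq_of_summary_eq {S : CPS Q A Γ} {u v : Word A} (hu : Bottomed S.bot u)
    (hv : Bottomed S.bot v) (hu0 : ZeroLinks u) (hv0 : ZeroLinks v) (hune : u ≠ []) (hvne : v ≠ [])
    (h : summary S u = summary S v) : loopInfo S u = loopInfo S v := by
  obtain ⟨u, x, rfl⟩ := (List.eq_nil_or_concat' u).resolve_left hune
  obtain ⟨v, y, rfl⟩ := (List.eq_nil_or_concat' v).resolve_left hvne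
  simp only [summary_concat, Prod.mk.injEq, decide_eq_decide] at h
  obtain ⟨hret, hloop, hbelow, hsym, hlvl⟩ := h
  obtain rfl := hu0.letter_eq hv0 hsym hlvl
  have hnil : u = [] ↔ v = [] :=
    (hu u x List.prefix_rfl).symm.trans (hv v x List.prefix_rfl)
  by_cases hune : u = []
  · rw [hune, hnil.1 hune]
  · have hvne : v ≠ [] := mt hnil.2 hune
    exact loopInfo_concat_congr hune hvne hu0 hv0 hret hloop
      (symW_eq_of_getD_eq hune hvne hbelow)

theorem summary_concat_congr {S : CPS Q A Γ} {u v : Word A} {x : Letter A}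
    (hu : Bottomed S.bot (u ++ [x])) (hv : Bottomed S.bot (v ++ [x])) (hux : ZeroLinks (u ++ [x]))
    (hvx : ZeroLinks (v ++ [x])) (h : summary S u = summary S v) :
    summary S (u ++ [x]) = summary S (v ++ [x]) := by
  have hnil : u = [] ↔ v = [] :=
    (hu u x List.prefix_rfl).symm.trans (hv v x List.prefix_rfl)
  by_cases hune : u = []
  · rw [hune, hnil.1 hune]
  · have hinfo := loopInfo_eq_of_summary_eq (hu.of_prefix (List.prefix_append _ _))
      (hv.of_prefix (List.prefix_append _ _)) hux.of_append hvx.of_append hune (mt hnil.2 hune) h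
    simp only [loopInfo, Prod.mk.injEq] at hinfo
    obtain ⟨hret, hloop, -, -, -, hsym, -⟩ := hinfo
    rw [summary_concat, summary_concat, hret, hloop, hsym]

/-- There is a deterministic finite automaton with output with at
most `2^(|Q|²)·2^(|Q|²)·|Σ|²·2` states computing `ExRet(w)`, `ExLoop(w)`,
`ExHLoop(w)`, `ExLLoop(w)`, `ExOneLoop(w)`, `Sym(w)` and `Lvl(w)` on input `w↓₀`
for every word `w` occurring as the topmost word of some stack. -/
theorem loops_computable_by_moore
    {Q A Γ : Type} [Fintype Q] [Fintype A] [DecidableEq A] (S : CPS Q A Γ) :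
    ∃ M : Moore (Letter A)
        (Set (Q × Q) × Set (Q × Q) × Set (Q × Q) × Set (Q × Q) × Set (Q × Q) ×
          Option A × Option ℕ),
      Nat.card M.St ≤ 2 ^ (Fintype.card Q * Fintype.card Q) *
          2 ^ (Fintype.card Q * Fintype.card Q) * Fintype.card A ^ 2 * 2 ∧
      ∀ (s : Stack2 A) (w : Word A), IsStack S.bot s → top2 s = some w →
        M.output (down0 w) =
          (ExRet S w, ExLoop S w, ExHLoop S w, ExLLoop S w, ExOneLoop S w,
            symW w, lvlW w) := by
  obtain ⟨M, hcard, hM⟩ := exists_moore_of_congr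
    (P := {w | Bottomed S.bot w ∧ ZeroLinks w}) (D := {w | w ≠ [] ∧ Bottomed S.bot w ∧ ZeroLinks w})
    (summary S) (loopInfo S)
    (fun _ _ h => ⟨h.1.of_prefix (List.prefix_append _ _), h.2.of_append⟩)
    (fun _ h => h.2)
    (fun _ _ _ hu hv => summary_concat_congr hu.1 hv.1 hu.2 hv.2)
    (fun _ hu _ hv => loopInfo_eq_of_summary_eq hu.2.1 hv.2.1 hu.2.2 hv.2.2 hu.1 hv.1)
  refine ⟨M, (hcard.trans (card_summary Q A)).le, fun s w hs hw => ?_⟩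
  obtain ⟨hne, hbot⟩ := hs.bottomed (List.mem_of_getLast? hw)
  exact (hM (down0 w) ⟨by simpa [down0] using hne, hbot.down0, zeroLinks_down0 w⟩).trans
    (loopInfo_down0 S w)


end CPG
end

section
/- For each level-2 stack s ∈ Stacks(Σ), the map d ↦ LeftStack(d,s) is an order isomorphism from (dom(Enc(s)), ≤_lex) onto (Milestones(s), ≪). -/
namespace CPG

variable {Q A Γ : Type} [DecidableEq A]

/-!
Both `Enc(s)` and the milestones of `s` follow the splitting of a blockline into its first maximal
block and the remaining blocks. A milestone of a `τ`-blockline either is the word `τ`, or ends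
inside the first maximal block `τ∖L` and comes from a milestone of `L`, or contains that block and
continues with a milestone of the rest; these cases are the root, the left subtree and the right
subtree of the encoding. Hence `LeftStack` maps onto the milestones, and along the lexicographic
order the pair (width, length of the topmost word) increases strictly. For milestones of one stack
an increase of this pair is a generating step of `≪`. Conversely, `≪` strictly increases a rank on
arbitrary stacks, so it holds between no other pairs of distinct milestones.
-/
/-! ## Prefixes and the lexicographic order -/

section Lists

variable {α : Type} [DecidableEq α]

theorem prefix_lcp_iff {u v w : List α} : w <+: lcp u v ↔ w <+: u ∧ w <+: v := by
  induction u generalizing v w with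
  | nil => simp +contextual [lcp]
  | cons a u ih =>
    cases v with
    | nil => simp +contextual [lcp]
    | cons b v =>
      cases w with
      | nil => simp
      | cons c w =>
        by_cases hab : a = b
        · subst hab
          simp only [lcp, if_true, List.cons_prefix_cons, ih]
          tauto
        · simp only [lcp, if_neg hab, List.prefix_nil, List.cons_prefix_cons]
          grind

theorem lcp_cons_cons_self (a : α) (u v : List α) : lcp (a :: u) (a :: v) = a :: lcp u v := by
  simp [lcp]

end Lists

theorem lexLe_cons {a b : Bool} {d e : List Bool} :
    lexLe (a :: d) (b :: e) ↔ a < b ∨ a = b ∧ lexLe d e := by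
  constructor
  · rintro (h | ⟨_ | ⟨c, cs⟩, x, y, hd, he⟩)
    · exact .inr ⟨(List.cons_prefix_cons.1 h).1, .inl (List.cons_prefix_cons.1 h).2⟩
    · obtain ⟨rfl, -⟩ := List.cons_eq_cons.1 hd
      obtain ⟨rfl, -⟩ := List.cons_eq_cons.1 he
      exact .inl rfl
    · obtain ⟨rfl, hd'⟩ := List.cons_eq_cons.1 hd
      obtain ⟨hb, he'⟩ := List.cons_eq_cons.1 he
      exact .inr ⟨hb.symm, .inr ⟨cs, x, y, hd', he'⟩⟩
  · rintro (h | ⟨rfl, h | ⟨c, x, y, rfl, rfl⟩⟩)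
    · obtain ⟨rfl, rfl⟩ := Bool.lt_iff.1 h
      exact .inr ⟨[], d, e, rfl, rfl⟩
    · exact .inl (List.cons_prefix_cons.2 ⟨rfl, h⟩)
    · exact .inr ⟨a :: c, x, y, rfl, rfl⟩

theorem lexLe_iff_le {d e : List Bool} : lexLe d e ↔ d ≤ e := by
  induction d generalizing e with
  | nil => exact iff_of_true (.inl List.nil_prefix) ((le_of_not_gt (List.not_lt_nil e)))
  | cons a d ih =>
    cases e with
    | nil => simp [lexLe]
    | cons b e =>
      rw [lexLe_cons, ih, le_iff_lt_or_eq, le_iff_lt_or_eq, List.cons_lt_cons_iff,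
        List.cons_eq_cons]
      tauto

/-! ## Blocklines and their maximal blocks -/

section Blocklines

omit [DecidableEq A]

/-- `τ`-blocklines. A concatenation of `τ`-blocks is the same as a 2-word all of whose words
start with `τ`. -/
def IsBlockline (τ : Letter A) (l : Stack2 A) : Prop := ∀ w ∈ l, [τ] <+: w

/-- The `τ`-block inducing the blockline `l`: the word `τ` if `l` is empty, and `τ∖l` otherwise. -/
def block (τ : Letter A) : Stack2 A → Stack2 A
  | [] => [[τ]]
  | w :: l => (w :: l).map (List.cons τ)

/-- `block τ L ++ R` is a `τ`-blockline whose first maximal block is `block τ L`, where `L` is a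
`τ'`-blockline (`τ'` is arbitrary if `L` is empty). -/
structure IsBlockDecomp (τ τ' : Letter A) (L R : Stack2 A) : Prop where
  isBlockline_left : IsBlockline τ' L
  isBlockline_right : IsBlockline τ R
  maximal : L ≠ [] → ∀ w ∈ R.head?, ¬ [τ, τ'] <+: w

theorem IsBlockline.nil (τ : Letter A) : IsBlockline τ [] := by simp [IsBlockline]

theorem isBlockline_append {τ : Letter A} {l r : Stack2 A} :
    IsBlockline τ (l ++ r) ↔ IsBlockline τ l ∧ IsBlockline τ r := by
  simp only [IsBlockline, List.mem_append]
  grind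

theorem isBlockline_singleton {τ : Letter A} {w : Word A} :
    IsBlockline τ [w] ↔ [τ] <+: w := by
  simp [IsBlockline]

theorem block_of_ne_nil (τ : Letter A) {l : Stack2 A} (hl : l ≠ []) :
    block τ l = l.map (List.cons τ) := by
  cases l with
  | nil => contradiction
  | cons w l => rfl

theorem block_ne_nil (τ : Letter A) (l : Stack2 A) : block τ l ≠ [] := by
  cases l <;> simp [block]

theorem length_le_length_block (τ : Letter A) (l : Stack2 A) :
    l.length ≤ (block τ l).length := by
  cases l <;> simp [block]

theorem size2_append (l r : Stack2 A) : size2 (l ++ r) = size2 l + size2 r := by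
  simp [size2]

theorem size2_lt_size2_block (τ : Letter A) (l : Stack2 A) : size2 l < size2 (block τ l) := by
  cases l with
  | nil => simp [block, size2]
  | cons w l =>
    simp only [size2, List.map_cons, List.sum_cons, block, List.length_cons, List.map_map,
      Function.comp_def, List.sum_map_add, List.map_const', List.sum_replicate, smul_eq_mul,
      mul_one]
    omega

theorem IsBlockline.isBlockDecomp_nil {τ' : Letter A} {L : Stack2 A} (hL : IsBlockline τ' L)
    (τ : Letter A) : IsBlockDecomp τ τ' L [] :=
  ⟨hL, .nil τ, by simp⟩

theorem takeWhile_dropWhile_append_of_head?_neg {α : Type} {p : α → Bool} {l r : List α}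
    (hl : ∀ a ∈ l, p a) (hr : ∀ a ∈ r.head?, ¬ p a) :
    (l ++ r).takeWhile p = l ∧ (l ++ r).dropWhile p = r := by
  rw [List.takeWhile_append_of_pos hl, List.dropWhile_append_of_pos hl]
  cases r with
  | nil => simp
  | cons a r => simp_all

end Blocklines

/-- The blockline induced by the first maximal block. -/
def inducedBlockline : Stack2 A → Stack2 A
  | (τ :: τ' :: u) :: l =>
    (((τ :: τ' :: u) :: l).takeWhile fun v => v.take 2 = [τ, τ']).map List.tail
  | _ => []

/-- The blockline left after removing the first maximal block. -/
def laterBlocks : Stack2 A → Stack2 A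
  | (τ :: τ' :: u) :: l => ((τ :: τ' :: u) :: l).dropWhile fun v => v.take 2 = [τ, τ']
  | l => l.tail

theorem IsBlockDecomp.takeWhile_dropWhile {τ τ' : Letter A} {L R : Stack2 A}
    (h : IsBlockDecomp τ τ' L R) (hL : L ≠ []) :
    (L.map (List.cons τ) ++ R).takeWhile (fun v => v.take 2 = [τ, τ']) = L.map (List.cons τ) ∧
      (L.map (List.cons τ) ++ R).dropWhile (fun v => v.take 2 = [τ, τ']) = R := by
  refine takeWhile_dropWhile_append_of_head?_neg ?_ fun w hw => ?_
  · simp only [List.mem_map, decide_eq_true_eq]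
    rintro _ ⟨w, hw, rfl⟩
    obtain ⟨u, rfl⟩ := h.isBlockline_left w hw
    simp
  · simpa [List.prefix_iff_eq_take, eq_comm] using h.maximal hL w hw

theorem IsBlockDecomp.inducedBlockline_eq {τ τ' : Letter A} {L R : Stack2 A}
    (h : IsBlockDecomp τ τ' L R) : inducedBlockline (block τ L ++ R) = L := by
  rcases L with _ | ⟨w, L⟩
  · rfl
  · obtain ⟨u, rfl⟩ := h.isBlockline_left w List.mem_cons_self
    have htake := (h.takeWhile_dropWhile (List.cons_ne_nil _ _)).1
    simp only [block, List.map_cons, List.cons_append, List.nil_append] at htake ⊢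
    rw [inducedBlockline, htake]
    simp [Function.comp_def]

theorem IsBlockDecomp.laterBlocks_eq {τ τ' : Letter A} {L R : Stack2 A}
    (h : IsBlockDecomp τ τ' L R) : laterBlocks (block τ L ++ R) = R := by
  rcases L with _ | ⟨w, L⟩
  · rfl
  · obtain ⟨u, rfl⟩ := h.isBlockline_left w List.mem_cons_self
    exact (h.takeWhile_dropWhile (List.cons_ne_nil _ _)).2

omit [DecidableEq A] in
theorem exists_map_cons_append_of_isBlockline (τ τ' : Letter A) {l : Stack2 A}
    (hl : IsBlockline τ l) :
    ∃ L R, l = L.map (List.cons τ) ++ R ∧ IsBlockline τ' L ∧ IsBlockline τ R ∧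
      ∀ w ∈ R.head?, ¬ [τ, τ'] <+: w := by
  induction l with
  | nil => exact ⟨[], [], rfl, .nil τ', hl, by simp⟩
  | cons w l ih =>
    by_cases hw : [τ, τ'] <+: w
    · obtain ⟨L, R, rfl, hL, hR, hmax⟩ := ih fun v hv => hl v (List.mem_cons_of_mem _ hv)
      obtain ⟨u, rfl⟩ := hw
      refine ⟨(τ' :: u) :: L, R, rfl, ?_, hR, hmax⟩
      rw [IsBlockline, List.forall_mem_cons]
      exact ⟨⟨u, rfl⟩, hL⟩
    · exact ⟨[], w :: l, rfl, .nil τ', hl, by simpa⟩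

omit [DecidableEq A] in
theorem IsBlockline.exists_isBlockDecomp {τ : Letter A} {l : Stack2 A} (hl : IsBlockline τ l)
    (hne : l ≠ []) : ∃ τ' L R, l = block τ L ++ R ∧ IsBlockDecomp τ τ' L R := by
  obtain ⟨w, l, rfl⟩ := List.exists_cons_of_ne_nil hne
  obtain ⟨⟨u, rfl⟩, hl'⟩ := List.forall_mem_cons.1 hl
  rcases u with _ | ⟨τ', u⟩
  · exact ⟨τ, [], l, rfl, .nil τ, hl', by simp⟩
  · obtain ⟨L, R, rfl, hL, hR, hmax⟩ := exists_map_cons_append_of_isBlockline τ τ' hl'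
    refine ⟨τ', (τ' :: u) :: L, R, rfl, ?_, hR, fun _ => hmax⟩
    rw [IsBlockline, List.forall_mem_cons]
    exact ⟨⟨u, rfl⟩, hL⟩

omit [DecidableEq A] in
@[elab_as_elim]
theorem IsBlockline.induction {motive : ∀ (τ : Letter A) (l : Stack2 A), IsBlockline τ l → Prop}
    (nil : ∀ τ, motive τ [] (.nil τ))
    (block_append : ∀ (τ τ' : Letter A) (L R : Stack2 A) (h : IsBlockDecomp τ τ' L R)
      (hLR : IsBlockline τ (block τ L ++ R)), motive τ' L h.isBlockline_left →
      motive τ R h.isBlockline_right → motive τ (block τ L ++ R) hLR)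
    (τ : Letter A) (l : Stack2 A) (hl : IsBlockline τ l) : motive τ l hl := by
  induction hn : size2 l using Nat.strong_induction_on generalizing τ l with
  | _ n ih =>
    subst hn
    rcases eq_or_ne l [] with rfl | hne
    · exact nil τ
    · obtain ⟨τ', L, R, rfl, h⟩ := hl.exists_isBlockDecomp hne
      have hsize := size2_lt_size2_block τ L
      rw [size2_append] at ih
      exact block_append τ τ' L R h hl (ih (size2 L) (by omega) τ' L h.isBlockline_left rfl)
        (ih (size2 R) (by omega) τ R h.isBlockline_right rfl)

/-! ## Encodings of blocklines -/

/-- The subtree encoding a blockline that is absent if the blockline is empty. -/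
def encBL? (Q : Type) (n : ℕ) (σ : EncLabel Q A) (l : Stack2 A) : Option (PTree (EncLabel Q A)) :=
  if l = [] then none else some (encBL Q n σ l)

/-- The tree `Enc(l, σ)`, as a possibly absent subtree. -/
def enc? (Q : Type) (σ : EncLabel Q A) (l : Stack2 A) : Option (PTree (EncLabel Q A)) :=
  encBL? Q (size2 l + 1) σ l

theorem enc?_nil (Q : Type) (σ : EncLabel Q A) : enc? Q σ [] = none := rfl

theorem encBL_succ_cons_cons (Q : Type) (n : ℕ) (σ : EncLabel Q A) (τ τ' : Letter A) (u : Word A)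
    (l : Stack2 A) :
    encBL Q (n + 1) σ ((τ :: τ' :: u) :: l) =
      .node σ (encBL? Q n (symLab τ') (inducedBlockline ((τ :: τ' :: u) :: l)))
        (encBL? Q n epsLab (laterBlocks ((τ :: τ' :: u) :: l))) := by
  have hstep : encBL Q (n + 1) σ ((τ :: τ' :: u) :: l) =
      .node σ (some (encBL Q n (symLab τ') (inducedBlockline ((τ :: τ' :: u) :: l))))
        (match laterBlocks ((τ :: τ' :: u) :: l) with
          | [] => none
          | _ :: _ => some (encBL Q n epsLab (laterBlocks ((τ :: τ' :: u) :: l)))) := rfl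
  have hne : inducedBlockline ((τ :: τ' :: u) :: l) ≠ [] := by simp [inducedBlockline]
  rw [hstep, encBL?, if_neg hne]
  cases laterBlocks ((τ :: τ' :: u) :: l) <;> rfl

theorem encBL_block_append (Q : Type) {τ τ' : Letter A} {L R : Stack2 A}
    (h : IsBlockDecomp τ τ' L R) (n : ℕ) (σ : EncLabel Q A) :
    encBL Q (n + 1) σ (block τ L ++ R) =
      .node σ (encBL? Q n (symLab τ') L) (encBL? Q n epsLab R) := by
  rcases L with _ | ⟨w, L⟩
  · cases R <;> rfl
  · obtain ⟨u, rfl⟩ := h.isBlockline_left w List.mem_cons_self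
    have hcons := encBL_succ_cons_cons Q n σ τ τ' u (L.map (List.cons τ) ++ R)
    rwa [show (τ :: τ' :: u) :: (L.map (List.cons τ) ++ R) = block τ (([τ'] ++ u) :: L) ++ R
      from rfl, h.inducedBlockline_eq, h.laterBlocks_eq] at hcons

theorem encBL?_eq_of_size2_lt (Q : Type) {τ : Letter A} {l : Stack2 A} (hl : IsBlockline τ l)
    {n n' : ℕ} (σ : EncLabel Q A) (hn : size2 l < n) (hn' : size2 l < n') :
    encBL? Q n σ l = encBL? Q n' σ l := by
  induction τ, l, hl using IsBlockline.induction generalizing n n' σ with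
  | nil => rfl
  | block_append τ τ' L R h _ ihL ihR =>
    obtain ⟨n, rfl⟩ := Nat.exists_eq_succ_of_ne_zero (Nat.ne_zero_of_lt hn)
    obtain ⟨n', rfl⟩ := Nat.exists_eq_succ_of_ne_zero (Nat.ne_zero_of_lt hn')
    have hL := size2_lt_size2_block τ L
    rw [size2_append] at hn hn'
    have hne : block τ L ++ R ≠ [] := List.append_ne_nil_of_left_ne_nil (block_ne_nil τ L) R
    rw [encBL?, encBL?, if_neg hne, if_neg hne, encBL_block_append Q h, encBL_block_append Q h,
      ihL (n := n) (n' := n') _ (by omega) (by omega),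
      ihR (n := n) (n' := n') _ (by omega) (by omega)]

theorem enc?_block_append (Q : Type) {τ τ' : Letter A} {L R : Stack2 A}
    (h : IsBlockDecomp τ τ' L R) (σ : EncLabel Q A) :
    enc? Q σ (block τ L ++ R) = some (.node σ (enc? Q (symLab τ') L) (enc? Q epsLab R)) := by
  have hL := size2_lt_size2_block τ L
  have hne : block τ L ++ R ≠ [] := List.append_ne_nil_of_left_ne_nil (block_ne_nil τ L) R
  rw [enc?, encBL?, if_neg hne, encBL_block_append Q h, size2_append,
    encBL?_eq_of_size2_lt Q h.isBlockline_left _ (by omega) (Nat.lt_succ_self _),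
    encBL?_eq_of_size2_lt Q h.isBlockline_right _ (by omega) (Nat.lt_succ_self _)]
  rfl

theorem enc?_eq_some_encStack (Q : Type) (bot : A) {s : Stack2 A} (hs : s ≠ []) :
    enc? Q (Sum.inr (Sum.inl (bot, 1))) s = some (encStack Q bot s) :=
  if_neg hs

section Trees

variable {α : Type} (a : α) (l r : Option (PTree α)) (d : List Bool)

theorem PTree.labelAt_node_false :
    (PTree.node a l r).labelAt (false :: d) = l.bind fun t => t.labelAt d := by
  cases l <;> rfl

theorem PTree.labelAt_node_true :
    (PTree.node a l r).labelAt (true :: d) = r.bind fun t => t.labelAt d := by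
  cases r <;> rfl

theorem restrictLex_node_false :
    restrictLex (.node a l r) (false :: d) = .node a (l.map fun t => restrictLex t d) none := by
  cases l <;> rfl

theorem restrictLex_node_true :
    restrictLex (.node a l r) (true :: d) = .node a l (r.map fun t => restrictLex t d) := by
  cases r <;> rfl

end Trees

/-- The domain of `Enc(l, σ)`, empty if `l` is. -/
def encDom (Q : Type) (σ : EncLabel Q A) (l : Stack2 A) : Set (List Bool) :=
  {d | (enc? Q σ l).bind (fun t => t.labelAt d) ≠ none}

theorem mem_encDom_iff {Q : Type} {bot : A} {s : Stack2 A} {d : List Bool} (hs : s ≠ []) :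
    d ∈ encDom Q (Sum.inr (Sum.inl (bot, 1))) s ↔ (encStack Q bot s).labelAt d ≠ none := by
  simp only [encDom, enc?_eq_some_encStack Q bot hs, Option.bind_some, Set.mem_ofPred_eq]

theorem encDom_nil (Q : Type) (σ : EncLabel Q A) : encDom Q σ [] = ∅ := by
  simp [encDom, enc?_nil]

section

variable {Q : Type} {σ : EncLabel Q A} {τ τ' : Letter A} {L R : Stack2 A} {d : List Bool}

theorem nil_mem_encDom_block_append (h : IsBlockDecomp τ τ' L R) :
    [] ∈ encDom Q σ (block τ L ++ R) := by
  simp [encDom, enc?_block_append Q h, PTree.labelAt]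

theorem false_cons_mem_encDom_block_append (h : IsBlockDecomp τ τ' L R) :
    false :: d ∈ encDom Q σ (block τ L ++ R) ↔ d ∈ encDom Q (symLab τ') L := by
  simp only [encDom, enc?_block_append Q h, Option.bind_some, PTree.labelAt_node_false,
    Set.mem_ofPred_eq]

theorem true_cons_mem_encDom_block_append (h : IsBlockDecomp τ τ' L R) :
    true :: d ∈ encDom Q σ (block τ L ++ R) ↔ d ∈ encDom Q epsLab R := by
  simp only [encDom, enc?_block_append Q h, Option.bind_some, PTree.labelAt_node_true,
    Set.mem_ofPred_eq]

end

/-! ## Left stacks -/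

/-- `LeftStack(d, l)`, computed along the address `d`: the blockline whose encoding is the part of
the encoding of the blockline `l` that is lexicographically at most `d`. Junk if `d` is not an
address of that encoding. -/
def leftStack : List Bool → Stack2 A → Stack2 A
  | [], (τ :: _) :: _ => [[τ]]
  | false :: d, (τ :: u) :: l => block τ (leftStack d (inducedBlockline ((τ :: u) :: l)))
  | true :: d, (τ :: u) :: l =>
    block τ (inducedBlockline ((τ :: u) :: l)) ++ leftStack d (laterBlocks ((τ :: u) :: l))
  | _, _ => []

omit [DecidableEq A] in
theorem exists_block_append_eq_cons (τ : Letter A) (L R : Stack2 A) :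
    ∃ u l, block τ L ++ R = (τ :: u) :: l := by
  cases L <;> simp [block]

section

variable {τ τ' : Letter A} {L R : Stack2 A}

theorem leftStack_nil_block_append (τ : Letter A) (L R : Stack2 A) :
    leftStack [] (block τ L ++ R) = [[τ]] := by
  obtain ⟨u, l, hul⟩ := exists_block_append_eq_cons τ L R
  rw [hul, leftStack]

theorem leftStack_false_cons_block_append (h : IsBlockDecomp τ τ' L R) (d : List Bool) :
    leftStack (false :: d) (block τ L ++ R) = block τ (leftStack d L) := by
  obtain ⟨u, l, hul⟩ := exists_block_append_eq_cons τ L R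
  rw [hul, leftStack, ← hul, h.inducedBlockline_eq]

theorem leftStack_true_cons_block_append (h : IsBlockDecomp τ τ' L R) (d : List Bool) :
    leftStack (true :: d) (block τ L ++ R) = block τ L ++ leftStack d R := by
  obtain ⟨u, l, hul⟩ := exists_block_append_eq_cons τ L R
  rw [hul, leftStack, ← hul, h.inducedBlockline_eq, h.laterBlocks_eq]

end

/-! ## Milestones of blocklines -/

/-- `m` is a milestone of `l`, where the milestones with a single word are those of a stack in
which the first word of `l` is preceded by `p`. The milestones of a stack are the case `p = ⊥`. -/
inductive MilestoneAfter : Word A → Stack2 A → Stack2 A → Prop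
  | top {p w v : Word A} (l : Stack2 A) : lcp p w <+: v → v <+: w → MilestoneAfter p (w :: l) [v]
  | cons (p : Word A) {w : Word A} {l m : Stack2 A} :
    MilestoneAfter w l m → MilestoneAfter p (w :: l) (w :: m)

omit [DecidableEq A] in
theorem wordAt_eq_getD (bot : A) (s : Stack2 A) (i : ℕ) :
    wordAt bot s i = ([Sum.inl bot] :: s).getD i [] := by
  cases i <;> rfl

theorem milestoneAfter_cons {p w : Word A} {l m : Stack2 A} :
    MilestoneAfter p (w :: l) m ↔
      (∃ v, lcp p w <+: v ∧ v <+: w ∧ m = [v]) ∨ ∃ m', MilestoneAfter w l m' ∧ m = w :: m' := by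
  constructor
  · rintro (⟨_, hlcp, hw⟩ | ⟨_, hm⟩)
    · exact .inl ⟨_, hlcp, hw, rfl⟩
    · exact .inr ⟨_, hm, rfl⟩
  · rintro (⟨v, hlcp, hw, rfl⟩ | ⟨m', hm, rfl⟩)
    · exact .top l hlcp hw
    · exact .cons p hm

theorem not_milestoneAfter_nil (p : Word A) (m : Stack2 A) : ¬ MilestoneAfter p [] m := by
  rintro ⟨⟩

theorem milestoneAfter_iff_exists_take {p : Word A} {s m : Stack2 A} :
    MilestoneAfter p s m ↔ ∃ i v, i < s.length ∧ m = s.take i ++ [v] ∧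
      lcp ((p :: s).getD i []) ((p :: s).getD (i + 1) []) <+: v ∧
        v <+: (p :: s).getD (i + 1) [] := by
  induction s generalizing p m with
  | nil => simp [not_milestoneAfter_nil]
  | cons w s ih =>
    rw [milestoneAfter_cons]
    constructor
    · rintro (⟨v, hlcp, hw, rfl⟩ | ⟨m', hm, rfl⟩)
      · exact ⟨0, v, Nat.succ_pos _, rfl, hlcp, hw⟩
      · obtain ⟨i, v, hi, rfl, hv⟩ := ih.1 hm
        exact ⟨i + 1, v, Nat.succ_lt_succ hi, rfl, hv⟩
    · rintro ⟨_ | i, v, hi, rfl, hv⟩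
      · exact .inl ⟨v, hv.1, hv.2, rfl⟩
      · exact .inr ⟨_, ih.2 ⟨i, v, Nat.lt_of_succ_lt_succ hi, rfl, hv⟩, rfl⟩

theorem milestone_iff_milestoneAfter {bot : A} {s m : Stack2 A} :
    Milestone bot s m ↔ MilestoneAfter [Sum.inl bot] s m := by
  simp only [Milestone, wordAt_eq_getD, milestoneAfter_iff_exists_take]

theorem MilestoneAfter.ne_nil {p : Word A} {l m : Stack2 A} (h : MilestoneAfter p l m) :
    m ≠ [] := by
  cases h <;> simp

theorem MilestoneAfter.length_le {p : Word A} {l m : Stack2 A} (h : MilestoneAfter p l m) :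
    m.length ≤ l.length := by
  induction h <;> simp_all

theorem MilestoneAfter.exists_head?_prefix {p : Word A} {l m : Stack2 A}
    (h : MilestoneAfter p l m) : ∀ v ∈ m.head?, ∃ w ∈ l.head?, v <+: w := by
  cases h <;> simp_all

theorem MilestoneAfter.isBlockline {p : Word A} {l m : Stack2 A} (h : MilestoneAfter p l m)
    {τ : Letter A} (hp : [τ] <+: p) (hl : IsBlockline τ l) : IsBlockline τ m := by
  induction h with
  | top l hlcp _ =>
    exact isBlockline_singleton.2
      ((prefix_lcp_iff.2 ⟨hp, hl _ List.mem_cons_self⟩).trans hlcp)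
  | cons p _ ih =>
    have ⟨hw, hl⟩ := List.forall_mem_cons.1 hl
    exact List.forall_mem_cons.2 ⟨hw, ih hw hl⟩

theorem MilestoneAfter.isBlockDecomp {τ τ' : Letter A} {L R m : Stack2 A}
    (h : MilestoneAfter [τ] R m) (hLR : IsBlockDecomp τ τ' L R) : IsBlockDecomp τ τ' L m := by
  refine ⟨hLR.isBlockline_left, h.isBlockline List.prefix_rfl hLR.isBlockline_right,
    fun hL v hv hτ => ?_⟩
  obtain ⟨w, hw, hvw⟩ := h.exists_head?_prefix v hv
  exact hLR.maximal hL w hw (hτ.trans hvw)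

theorem milestoneAfter_append {p : Word A} {l r m : Stack2 A} :
    MilestoneAfter p (l ++ r) m ↔
      MilestoneAfter p l m ∨ ∃ m', MilestoneAfter (l.getLastD p) r m' ∧ m = l ++ m' := by
  induction l generalizing p m with
  | nil => simp [not_milestoneAfter_nil]
  | cons w l ih =>
    simp only [List.cons_append, milestoneAfter_cons, ih, List.getLastD_cons]
    grind

theorem milestoneAfter_map_cons {τ : Letter A} {p : Word A} {l m : Stack2 A} :
    MilestoneAfter (τ :: p) (l.map (List.cons τ)) m ↔
      ∃ m', MilestoneAfter p l m' ∧ m = m'.map (List.cons τ) := by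
  induction l generalizing p m with
  | nil => simp [not_milestoneAfter_nil]
  | cons w l ih =>
    simp only [List.map_cons, milestoneAfter_cons, ih, lcp_cons_cons_self, List.cons_prefix_iff]
    constructor
    · rintro (⟨_, ⟨v, rfl, hlcp⟩, hw, rfl⟩ | ⟨_, ⟨m', hm, rfl⟩, rfl⟩)
      · exact ⟨[v], .inl ⟨v, hlcp, by simpa using hw, rfl⟩, rfl⟩
      · exact ⟨w :: m', .inr ⟨m', hm, rfl⟩, rfl⟩
    · rintro ⟨_, (⟨v, hlcp, hw, rfl⟩ | ⟨m', hm, rfl⟩), rfl⟩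
      · exact .inl ⟨τ :: v, ⟨v, rfl, hlcp⟩, List.cons_prefix_cons.2 ⟨rfl, hw⟩, rfl⟩
      · exact .inr ⟨_, ⟨m', hm, rfl⟩, rfl⟩

theorem milestoneAfter_congr {p q : Word A} {l m : Stack2 A}
    (h : ∀ w ∈ l.head?, lcp p w = lcp q w) : MilestoneAfter p l m ↔ MilestoneAfter q l m := by
  cases l with
  | nil => simp [not_milestoneAfter_nil]
  | cons w l => rw [milestoneAfter_cons, milestoneAfter_cons, h w rfl]

theorem IsBlockline.milestoneAfter_nil_iff {τ : Letter A} {l m : Stack2 A}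
    (hl : IsBlockline τ l) (hne : l ≠ []) :
    MilestoneAfter [] l m ↔ m = [[]] ∨ MilestoneAfter [τ] l m := by
  obtain ⟨w, l, rfl⟩ := List.exists_cons_of_ne_nil hne
  obtain ⟨u, rfl⟩ := hl w List.mem_cons_self
  have hprefix (v : Word A) (hv : v <+: τ :: u) : v = [] ∨ [τ] <+: v := by
    rcases v with _ | ⟨a, v⟩
    · exact .inl rfl
    · exact .inr (List.cons_prefix_cons.2 ⟨(List.cons_prefix_cons.1 hv).1.symm, List.nil_prefix⟩)
  simp only [milestoneAfter_cons, List.singleton_append, lcp, if_true, List.nil_prefix, true_and]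
  grind

theorem IsBlockDecomp.lcp_getLastD_eq {τ τ' : Letter A} {L R : Stack2 A}
    (h : IsBlockDecomp τ τ' L R) (hL : L ≠ []) :
    ∀ w ∈ R.head?, lcp ((L.map (List.cons τ)).getLastD [τ]) w = lcp [τ] w := by
  intro w hw
  obtain ⟨L', v, rfl⟩ := (List.eq_nil_or_concat' L).resolve_left hL
  obtain ⟨v, rfl⟩ := h.isBlockline_left v (by simp)
  obtain ⟨w, rfl⟩ := h.isBlockline_right w (List.mem_of_mem_head? hw)
  have hmax := h.maximal hL _ hw
  cases w <;> simp_all [lcp]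

theorem IsBlockDecomp.milestoneAfter_iff {τ τ' : Letter A} {L R m : Stack2 A}
    (h : IsBlockDecomp τ τ' L R) :
    MilestoneAfter [τ] (block τ L ++ R) m ↔
      m = [[τ]] ∨ (∃ m', MilestoneAfter [τ'] L m' ∧ m = m'.map (List.cons τ)) ∨
        ∃ m', MilestoneAfter [τ] R m' ∧ m = block τ L ++ m' := by
  rcases eq_or_ne L [] with rfl | hL
  · have hv (v : Word A) : lcp [τ] [τ] <+: v ∧ v <+: [τ] ↔ v = [τ] := by
      simp only [lcp, if_true]
      exact ⟨fun hv => (hv.1.eq_of_length_le hv.2.length_le).symm, by rintro rfl; simp⟩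
    simp [block, milestoneAfter_cons, not_milestoneAfter_nil, ← and_assoc, hv]
  · rw [block_of_ne_nil τ hL, milestoneAfter_append, milestoneAfter_map_cons]
    simp only [milestoneAfter_congr (h.lcp_getLastD_eq hL),
      h.isBlockline_left.milestoneAfter_nil_iff hL]
    grind

theorem milestoneAfter_leftStack (Q : Type) {τ : Letter A} {l : Stack2 A} (hl : IsBlockline τ l)
    {σ : EncLabel Q A} {d : List Bool} (hd : d ∈ encDom Q σ l) :
    MilestoneAfter [τ] l (leftStack d l) := by
  induction τ, l, hl using IsBlockline.induction generalizing σ d with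
  | nil => simp [encDom_nil] at hd
  | block_append τ τ' L R h _ ihL ihR =>
    rw [h.milestoneAfter_iff]
    match d with
    | [] => exact .inl (leftStack_nil_block_append τ L R)
    | false :: d =>
      have hm := ihL ((false_cons_mem_encDom_block_append h).1 hd)
      rw [leftStack_false_cons_block_append h, block_of_ne_nil τ hm.ne_nil]
      exact .inr (.inl ⟨_, hm, rfl⟩)
    | true :: d =>
      have hm := ihR ((true_cons_mem_encDom_block_append h).1 hd)
      exact .inr (.inr ⟨_, hm, leftStack_true_cons_block_append h d⟩)

theorem MilestoneAfter.exists_leftStack_eq (Q : Type) {τ : Letter A} {l m : Stack2 A}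
    (hm : MilestoneAfter [τ] l m) (hl : IsBlockline τ l) (σ : EncLabel Q A) :
    ∃ d ∈ encDom Q σ l, leftStack d l = m := by
  induction τ, l, hl using IsBlockline.induction generalizing σ m with
  | nil => exact absurd hm (not_milestoneAfter_nil _ m)
  | block_append τ τ' L R h _ ihL ihR =>
    obtain rfl | ⟨m', hm', rfl⟩ | ⟨m', hm', rfl⟩ := h.milestoneAfter_iff.1 hm
    · exact ⟨[], nil_mem_encDom_block_append h, leftStack_nil_block_append τ L R⟩
    · obtain ⟨d, hd, rfl⟩ := ihL hm' (symLab τ')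
      refine ⟨false :: d, (false_cons_mem_encDom_block_append h).2 hd, ?_⟩
      rw [leftStack_false_cons_block_append h, block_of_ne_nil τ hm'.ne_nil]
    · obtain ⟨d, hd, rfl⟩ := ihR hm' epsLab
      exact ⟨true :: d, (true_cons_mem_encDom_block_append h).2 hd,
        leftStack_true_cons_block_append h d⟩

theorem enc?_leftStack (Q : Type) {τ : Letter A} {l : Stack2 A} (hl : IsBlockline τ l)
    {σ : EncLabel Q A} {d : List Bool} (hd : d ∈ encDom Q σ l) :
    enc? Q σ (leftStack d l) = (enc? Q σ l).map fun t => restrictLex t d := by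
  induction τ, l, hl using IsBlockline.induction generalizing σ d with
  | nil => simp [encDom_nil] at hd
  | block_append τ τ' L R h _ ihL ihR =>
    rw [enc?_block_append Q h]
    match d with
    | [] =>
      rw [leftStack_nil_block_append τ L R]
      exact enc?_block_append Q ((IsBlockline.nil τ').isBlockDecomp_nil τ) σ
    | false :: d =>
      rw [false_cons_mem_encDom_block_append h] at hd
      have hm := (milestoneAfter_leftStack Q h.isBlockline_left hd).isBlockline List.prefix_rfl
        h.isBlockline_left
      have hleft := enc?_block_append Q (hm.isBlockDecomp_nil τ) σ
      rw [List.append_nil, ihL hd] at hleft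
      simp [leftStack_false_cons_block_append h, restrictLex_node_false, hleft, enc?_nil]
    | true :: d =>
      rw [true_cons_mem_encDom_block_append h] at hd
      have hm := milestoneAfter_leftStack Q h.isBlockline_right hd
      rw [leftStack_true_cons_block_append h, enc?_block_append Q (hm.isBlockDecomp h), ihR hd]
      simp [restrictLex_node_true]

/-! ## The order of milestones -/

/-- The width of a 2-word and the length of its topmost word, ordered lexicographically. On the
milestones of a stack this is an order embedding of `≪`. -/
def stackKey (m : Stack2 A) : ℕ ×ₗ ℕ := toLex (m.length, (m.getLastD []).length)

section StackKey

omit [DecidableEq A]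

theorem stackKey_lt_iff {m m' : Stack2 A} :
    stackKey m < stackKey m' ↔ m.length < m'.length ∨
      m.length = m'.length ∧ (m.getLastD []).length < (m'.getLastD []).length := by
  simp [stackKey, Prod.Lex.toLex_lt_toLex]

theorem stackKey_append_lt_iff {l m m' : Stack2 A} (hm : m ≠ []) (hm' : m' ≠ []) :
    stackKey (l ++ m) < stackKey (l ++ m') ↔ stackKey m < stackKey m' := by
  obtain ⟨k, w, rfl⟩ := (List.eq_nil_or_concat' m).resolve_left hm
  obtain ⟨k', w', rfl⟩ := (List.eq_nil_or_concat' m').resolve_left hm'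
  simp [stackKey_lt_iff, ← List.append_assoc]

theorem stackKey_map_cons_lt_iff {τ : Letter A} {m m' : Stack2 A} (hm : m ≠ []) (hm' : m' ≠ []) :
    stackKey (m.map (List.cons τ)) < stackKey (m'.map (List.cons τ)) ↔
      stackKey m < stackKey m' := by
  obtain ⟨l, w, rfl⟩ := (List.eq_nil_or_concat' m).resolve_left hm
  obtain ⟨l', w', rfl⟩ := (List.eq_nil_or_concat' m').resolve_left hm'
  simp [stackKey_lt_iff]

theorem stackKey_singleton_lt_map_cons {τ τ' : Letter A} {m : Stack2 A} (hm : m ≠ [])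
    (hτ' : IsBlockline τ' m) : stackKey [[τ]] < stackKey (m.map (List.cons τ)) := by
  obtain ⟨l, w, rfl⟩ := (List.eq_nil_or_concat' m).resolve_left hm
  obtain ⟨u, rfl⟩ := hτ' w (by simp)
  rcases l with _ | ⟨v, l⟩ <;> simp [stackKey_lt_iff]

theorem stackKey_lt_stackKey_append {l m m' : Stack2 A} (h : m.length ≤ l.length) (hm' : m' ≠ []) :
    stackKey m < stackKey (l ++ m') := by
  have hwidth := List.length_pos_of_ne_nil hm'
  rw [stackKey_lt_iff, List.length_append]
  omega

end StackKey

theorem strictMonoOn_stackKey_leftStack (Q : Type) {τ : Letter A} {l : Stack2 A}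
    (hl : IsBlockline τ l) (σ : EncLabel Q A) :
    StrictMonoOn (fun d => stackKey (leftStack d l)) (encDom Q σ l) := by
  induction τ, l, hl using IsBlockline.induction generalizing σ with
  | nil => simp [StrictMonoOn, encDom_nil]
  | block_append τ τ' L R h _ ihL ihR =>
    have hleft {d : List Bool} (hd : false :: d ∈ encDom Q σ (block τ L ++ R)) :=
      milestoneAfter_leftStack Q h.isBlockline_left ((false_cons_mem_encDom_block_append h).1 hd)
    have hright {d : List Bool} (hd : true :: d ∈ encDom Q σ (block τ L ++ R)) :=
      milestoneAfter_leftStack Q h.isBlockline_right ((true_cons_mem_encDom_block_append h).1 hd)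
    intro d hd e he hde
    match d, e with
    | _, [] => exact absurd hde (List.not_lt_nil _)
    | true :: _, false :: _ => exact absurd (List.cons_lt_cons_iff.1 hde) (by simp)
    | [], false :: e =>
      have hm := hleft he
      simp only [leftStack_nil_block_append, leftStack_false_cons_block_append h,
        block_of_ne_nil τ hm.ne_nil]
      exact stackKey_singleton_lt_map_cons hm.ne_nil
        (hm.isBlockline List.prefix_rfl h.isBlockline_left)
    | [], true :: e =>
      simp only [leftStack_nil_block_append, leftStack_true_cons_block_append h]
      exact stackKey_lt_stackKey_append (List.length_pos_of_ne_nil (block_ne_nil τ L))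
        (hright he).ne_nil
    | false :: d, false :: e =>
      simp only [leftStack_false_cons_block_append h, block_of_ne_nil τ (hleft hd).ne_nil,
        block_of_ne_nil τ (hleft he).ne_nil,
        stackKey_map_cons_lt_iff (hleft hd).ne_nil (hleft he).ne_nil]
      exact ihL _ ((false_cons_mem_encDom_block_append h).1 hd)
        ((false_cons_mem_encDom_block_append h).1 he) (by simpa using hde)
    | false :: d, true :: e =>
      have hwidth := (hleft hd).length_le.trans (length_le_length_block τ L)
      simp only [leftStack_false_cons_block_append h, leftStack_true_cons_block_append h,
        block_of_ne_nil τ (hleft hd).ne_nil]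
      exact stackKey_lt_stackKey_append (by rwa [List.length_map]) (hright he).ne_nil
    | true :: d, true :: e =>
      simp only [leftStack_true_cons_block_append h,
        stackKey_append_lt_iff (hright hd).ne_nil (hright he).ne_nil]
      exact ihR _ ((true_cons_mem_encDom_block_append h).1 hd)
        ((true_cons_mem_encDom_block_append h).1 he) (by simpa using hde)

section WordAt

omit [DecidableEq A]

theorem wordAt_eq_getLastD_take (bot : A) {s : Stack2 A} {i : ℕ} (hi : i ≤ s.length) :
    wordAt bot s i = (s.take i).getLastD [Sum.inl bot] := by
  rcases i with _ | i
  · rfl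
  · have hlast : (s.take (i + 1)).getLast? = s[i]? := by
      rw [List.getLast?_take, if_neg (Nat.succ_ne_zero i), Nat.add_sub_cancel,
        List.getElem?_eq_getElem hi, Option.some_or]
    rw [List.getLastD_eq_getLast?, hlast, List.getElem?_eq_getElem hi, wordAt,
      if_neg (Nat.succ_ne_zero i), Nat.add_sub_cancel, List.getD_eq_getElem _ _ hi]
    rfl

theorem wordAt_concat_length (bot : A) (k : Stack2 A) (w : Word A) :
    wordAt bot (k ++ [w]) k.length = k.getLastD [Sum.inl bot] := by
  rw [wordAt_eq_getLastD_take bot (by simp), List.take_left]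

theorem llBase_concat_iff {bot : A} {k k' : Stack2 A} {w w' : Word A} :
    llBase bot (k ++ [w]) (k' ++ [w']) ↔ k.length < k'.length ∨ k = k' ∧
      (w' <+: w ∧ w' ≠ w ∧ w <+: k.getLastD [Sum.inl bot] ∨
        w <+: w' ∧ w ≠ w' ∧ ¬ w' <+: k.getLastD [Sum.inl bot]) := by
  simp only [llBase, List.length_append, List.length_singleton, Nat.add_sub_cancel,
    wordAt_concat_length, List.dropLast_concat, List.getLastD_concat]
  constructor
  · rintro (h | ⟨-, -, hk, h⟩)
    exacts [.inl (by omega), .inr ⟨hk, h⟩]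
  · rintro (h | ⟨rfl, h⟩)
    exacts [.inl (by omega), .inr ⟨by simp, rfl, rfl, h⟩]

end WordAt

theorem Milestone.llBase_of_stackKey_lt {bot : A} {s m m' : Stack2 A} (hm : Milestone bot s m)
    (hm' : Milestone bot s m') (h : stackKey m < stackKey m') : llBase bot m m' := by
  obtain ⟨i, v, hi, rfl, hlcp, hv⟩ := hm
  obtain ⟨j, v', hj, rfl, -, hv'⟩ := hm'
  rw [stackKey_lt_iff] at h
  simp only [List.length_append, List.length_take, min_eq_left hi.le, min_eq_left hj.le,
    List.length_singleton, List.getLastD_concat] at h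
  rw [llBase_concat_iff, List.length_take_of_le hi.le, List.length_take_of_le hj.le,
    ← wordAt_eq_getLastD_take bot hi.le]
  obtain h | ⟨hij, h⟩ := h
  · exact .inl (by omega)
  · obtain rfl : i = j := by omega
    have hvv' : v <+: v' := List.prefix_of_prefix_length_le hv hv' h.le
    refine .inr ⟨rfl, .inr ⟨hvv', by rintro rfl; exact h.false, fun hbelow => h.not_ge ?_⟩⟩
    exact ((prefix_lcp_iff.2 ⟨hbelow, hv'⟩).trans hlcp).length_le

/-- A rank by which `≪` compares the stacks that differ only in their topmost word `w`, where `u`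
is the word below: the prefixes of `u` come first, longest first, then the other words, shortest
first. -/
def topWordRank (u w : Word A) : ℕ :=
  if w <+: u then u.length - w.length else u.length + 1 + w.length

theorem topWordRank_lt {u w w' : Word A}
    (h : w' <+: w ∧ w' ≠ w ∧ w <+: u ∨ w <+: w' ∧ w ≠ w' ∧ ¬ w' <+: u) :
    topWordRank u w < topWordRank u w' := by
  rcases h with ⟨hprefix, hne, hw⟩ | ⟨hprefix, hne, hw'⟩
  · have hlt := (hprefix.length_le.lt_of_ne fun h => hne (hprefix.eq_of_length h))
    have hle := hw.length_le
    rw [topWordRank, topWordRank, if_pos hw, if_pos (hprefix.trans hw)]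
    omega
  · have hlt := (hprefix.length_le.lt_of_ne fun h => hne (hprefix.eq_of_length h))
    rw [topWordRank, topWordRank, if_neg hw']
    split_ifs <;> omega

/-- A strictly monotone rank function for `≪`. -/
def llRank (bot : A) (m : Stack2 A) : ℕ ×ₗ ℕ :=
  toLex (m.length, topWordRank (wordAt bot m (m.length - 1)) (m.getLastD []))

theorem llBase.llRank_lt {bot : A} {s t : Stack2 A} (h : llBase bot s t) :
    llRank bot s < llRank bot t := by
  rw [llRank, llRank, Prod.Lex.toLex_lt_toLex]
  rcases h with h | ⟨hs, hlen, hst, h⟩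
  · exact .inl h
  · refine .inr ⟨hlen, ?_⟩
    have ht : t ≠ [] := by rintro rfl; exact hs (List.eq_nil_of_length_eq_zero hlen)
    obtain ⟨k, w, rfl⟩ := (List.eq_nil_or_concat' s).resolve_left hs
    obtain ⟨k', w', rfl⟩ := (List.eq_nil_or_concat' t).resolve_left ht
    obtain rfl : k = k' := by simpa using hst
    simp only [List.length_append, List.length_singleton, Nat.add_sub_cancel,
      wordAt_concat_length, List.getLastD_concat] at h ⊢
    exact topWordRank_lt h

theorem ll.llRank_le {bot : A} {s t : Stack2 A} (h : ll bot s t) :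
    llRank bot s ≤ llRank bot t := by
  induction h with
  | refl => exact le_rfl
  | tail _ hstep ih => exact ih.trans hstep.llRank_lt.le

/-! ## Stacks -/

omit [DecidableEq A] in
theorem IsBlockline.of_pop1_eq_some {τ : Letter A} {s t : Stack2 A} (hs : IsBlockline τ s)
    (h : pop1 s = some t) : IsBlockline τ t := by
  rcases List.eq_nil_or_concat' s with rfl | ⟨k, w, rfl⟩
  · cases h
  obtain ⟨hk, hw⟩ := isBlockline_append.1 hs
  rw [isBlockline_singleton] at hw
  obtain ⟨hlen, rfl⟩ : 1 < w.length ∧ k ++ [w.dropLast] = t := by simpa [pop1] using h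
  refine isBlockline_append.2 ⟨hk, isBlockline_singleton.2 ?_⟩
  exact List.prefix_of_prefix_length_le hw w.dropLast_prefix (by simp; omega)

theorem IsBlockline.of_applyOp_eq_some {bot : A} {τ : Letter A} {s t : Stack2 A}
    (hs : IsBlockline τ s) {op : Op A} (h : applyOp bot op s = some t) : IsBlockline τ t := by
  have push {k : Stack2 A} {w : Word A} (hkw : IsBlockline τ (k ++ [w])) (u : Word A) :
      IsBlockline τ (k ++ [w ++ u]) := by
    obtain ⟨hk, hw⟩ := isBlockline_append.1 hkw
    exact isBlockline_append.2 ⟨hk, isBlockline_singleton.2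
      ((isBlockline_singleton.1 hw).trans (List.prefix_append w u))⟩
  rcases List.eq_nil_or_concat' s with rfl | ⟨k, w, rfl⟩
  · cases op <;> simp [applyOp, clone2, pop1, pop2, collapse, push1, push2, top2, top1] at h
  cases op with
  | clone2 =>
    obtain rfl : k ++ [w] ++ [w] = t := by simpa [applyOp, clone2, top2] using h
    exact isBlockline_append.2 ⟨hs, (isBlockline_append.1 hs).2⟩
  | pop1 => exact hs.of_pop1_eq_some h
  | pop2 =>
    obtain ⟨-, rfl⟩ : k ≠ [] ∧ k = t := by
      simpa [applyOp, pop2, List.length_pos_iff] using h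
    exact (isBlockline_append.1 hs).1
  | collapse =>
    simp only [applyOp, collapse] at h
    split at h
    · obtain ⟨-, ht⟩ := Option.ite_none_right_eq_some.1 h
      obtain rfl := Option.some.inj ht
      exact fun w hw => hs w (List.mem_of_mem_take hw)
    · exact hs.of_pop1_eq_some h
    · cases h
  | push1 a =>
    obtain ⟨-, rfl⟩ : a ≠ bot ∧ k ++ [w ++ [Sum.inl a]] = t := by
      simpa [applyOp, push1, top2] using h
    exact push hs _
  | push2 a =>
    obtain ⟨-, rfl⟩ : a ≠ bot ∧ k ++ [w ++ [Sum.inr (a, k.length)]] = t := by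
      simpa [applyOp, push2, top2] using h
    exact push hs _

theorem IsStack.isBlockline {bot : A} {s : Stack2 A} (hs : IsStack bot s) :
    IsBlockline (Sum.inl bot) s := by
  induction hs with
  | base => exact isBlockline_singleton.2 List.prefix_rfl
  | step _ _ h ih => exact ih.of_applyOp_eq_some h

theorem ne_nil_of_applyOp {bot : A} {s t : Stack2 A} {op : Op A} (h : applyOp bot op s = some t) :
    t ≠ [] := by
  rintro rfl
  rcases List.eq_nil_or_concat' s with rfl | ⟨k, w, rfl⟩
  · cases op <;> simp [applyOp, clone2, pop1, pop2, collapse, push1, push2, top2, top1] at h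
  cases op with
  | pop2 =>
    simp [applyOp, pop2, List.length_pos_iff] at h
  | collapse =>
    simp only [applyOp, collapse] at h
    split at h
    · simp only [Option.ite_none_right_eq_some, Option.some.injEq, List.take_eq_nil_iff,
        List.append_eq_nil_iff, List.cons_ne_self, and_false, or_false] at h
      omega
    · simp [pop1] at h
    · cases h
  | _ => simp [applyOp, clone2, pop1, push1, push2, top2] at h

theorem IsStack.ne_nil {bot : A} {s : Stack2 A} (hs : IsStack bot s) : s ≠ [] := by
  cases hs with
  | base => exact List.cons_ne_nil _ _
  | step _ _ h => exact ne_nil_of_applyOp h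

theorem IsStack.of_append {bot : A} {s t : Stack2 A} (h : IsStack bot (s ++ t)) (hs : s ≠ []) :
    IsStack bot s := by
  induction t using List.reverseRecOn with
  | nil => simpa using h
  | append_singleton t w ih =>
    refine ih (h.step .pop2 ?_)
    simp [applyOp, pop2, ← List.append_assoc, List.length_pos_iff, hs]

theorem IsStack.concat_of_prefix {bot : A} {s : Stack2 A} {v w : Word A}
    (h : IsStack bot (s ++ [w])) (hvw : v <+: w) (hv : v ≠ []) : IsStack bot (s ++ [v]) := by
  obtain ⟨u, rfl⟩ := hvw
  induction u using List.reverseRecOn with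
  | nil => simpa using h
  | append_singleton u a ih =>
    refine ih (h.step .pop1 ?_)
    simp [applyOp, pop1, ← List.append_assoc, List.length_pos_iff, hv]

theorem IsStack.milestone {bot : A} {s m : Stack2 A} (hs : IsStack bot s)
    (hm : Milestone bot s m) : IsStack bot m := by
  have hblock := (milestone_iff_milestoneAfter.1 hm).isBlockline List.prefix_rfl hs.isBlockline
  obtain ⟨i, v, hi, rfl, -, hv⟩ := hm
  rw [wordAt_eq_getD, List.getD_cons_succ, List.getD_eq_getElem _ _ hi] at hv
  have hne : v ≠ [] := by
    rintro rfl
    simpa using hblock [] (by simp)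
  refine IsStack.concat_of_prefix (w := s[i]) (IsStack.of_append (t := s.drop (i + 1)) ?_ ?_) hv hne
  · rwa [← List.take_succ_eq_append_getElem hi, List.take_append_drop]
  · simpa using hs.ne_nil

/-! ## The order isomorphism -/

section OrderIsomorphism

variable (Q : Type) {bot : A} {s : Stack2 A}

theorem milestone_leftStack (hne : s ≠ []) (hs : IsBlockline (Sum.inl bot) s) {d : List Bool}
    (hd : (encStack Q bot s).labelAt d ≠ none) : Milestone bot s (leftStack d s) :=
  milestone_iff_milestoneAfter.2 (milestoneAfter_leftStack Q hs ((mem_encDom_iff hne).2 hd))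

theorem encStack_leftStack (hne : s ≠ []) (hs : IsBlockline (Sum.inl bot) s) {d : List Bool}
    (hd : (encStack Q bot s).labelAt d ≠ none) :
    encStack Q bot (leftStack d s) = restrictLex (encStack Q bot s) d := by
  have hne' : leftStack d s ≠ [] :=
    (milestone_iff_milestoneAfter.1 (milestone_leftStack Q hne hs hd)).ne_nil
  have henc := enc?_leftStack Q hs ((mem_encDom_iff hne).2 hd)
  rw [enc?_eq_some_encStack Q bot hne, enc?_eq_some_encStack Q bot hne'] at henc
  exact Option.some.inj henc

theorem llBase_leftStack_of_lt (hne : s ≠ []) (hs : IsBlockline (Sum.inl bot) s) {d e : List Bool}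
    (hd : (encStack Q bot s).labelAt d ≠ none) (he : (encStack Q bot s).labelAt e ≠ none)
    (hde : d < e) : llBase bot (leftStack d s) (leftStack e s) := by
  refine (milestone_leftStack Q hne hs hd).llBase_of_stackKey_lt
    (milestone_leftStack Q hne hs he) ?_
  exact strictMonoOn_stackKey_leftStack Q hs _ ((mem_encDom_iff hne).2 hd)
    ((mem_encDom_iff hne).2 he) hde

theorem strictMonoOn_llRank_leftStack (hne : s ≠ []) (hs : IsBlockline (Sum.inl bot) s) :
    StrictMonoOn (fun d => llRank bot (leftStack d s)) {d | (encStack Q bot s).labelAt d ≠ none} :=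
  fun _ hd _ he hde => (llBase_leftStack_of_lt Q hne hs hd he hde).llRank_lt

theorem lexLe_iff_ll_leftStack (hne : s ≠ []) (hs : IsBlockline (Sum.inl bot) s) {d e : List Bool}
    (hd : (encStack Q bot s).labelAt d ≠ none) (he : (encStack Q bot s).labelAt e ≠ none) :
    lexLe d e ↔ ll bot (leftStack d s) (leftStack e s) := by
  rw [lexLe_iff_le]
  constructor
  · intro hde
    obtain rfl | hlt := hde.eq_or_lt
    · exact .refl
    · exact .single (llBase_leftStack_of_lt Q hne hs hd he hlt)
  · exact fun hll => ((strictMonoOn_llRank_leftStack Q hne hs).le_iff_le hd he).1 hll.llRank_le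

theorem bijOn_leftStack (hne : s ≠ []) (hs : IsBlockline (Sum.inl bot) s) :
    Set.BijOn (fun d => leftStack d s) {d | (encStack Q bot s).labelAt d ≠ none}
      {m | Milestone bot s m} := by
  refine ⟨fun d hd => milestone_leftStack Q hne hs hd, fun d hd e he hde => ?_, fun m hm => ?_⟩
  · exact (strictMonoOn_llRank_leftStack Q hne hs).injOn hd he (congrArg (llRank bot) hde)
  · obtain ⟨d, hd, rfl⟩ :=
      (milestone_iff_milestoneAfter.1 hm).exists_leftStack_eq Q hs (Sum.inr (Sum.inl (bot, 1)))
    exact ⟨d, (mem_encDom_iff hne).1 hd, rfl⟩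

theorem leftStack_order_isomorphism_general (hne : s ≠ []) (hs : IsBlockline (Sum.inl bot) s) :
    (∀ d, (encStack Q bot s).labelAt d ≠ none →
      encStack Q bot (leftStack d s) = restrictLex (encStack Q bot s) d) ∧
    Set.BijOn (fun d => leftStack d s) {d | (encStack Q bot s).labelAt d ≠ none}
      {m | Milestone bot s m} ∧
    ∀ d ∈ {d : List Bool | (encStack Q bot s).labelAt d ≠ none},
      ∀ e ∈ {d : List Bool | (encStack Q bot s).labelAt d ≠ none},
        (lexLe d e ↔ ll bot (leftStack d s) (leftStack e s)) :=
  ⟨fun _ => encStack_leftStack Q hne hs, bijOn_leftStack Q hne hs,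
    fun _ hd _ he => lexLe_iff_ll_leftStack Q hne hs hd he⟩

end OrderIsomorphism

/-- For every stack `s`, the map `d ↦ LeftStack(d,s)` (the stack
whose encoding is the left-and-downward closed restriction of `Enc(s)` at `d`) is an
order isomorphism from `(dom(Enc(s)), ≤_lex)` onto `(Milestones(s), ≪)`. -/
theorem leftStack_order_isomorphism
    {A : Type} [DecidableEq A] (bot : A) (s : Stack2 A) (hs : IsStack bot s) :
    ∃ f : List Bool → Stack2 A,
      (∀ d, (encStack Unit bot s).labelAt d ≠ none →
        IsStack bot (f d) ∧
          encStack Unit bot (f d) = restrictLex (encStack Unit bot s) d) ∧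
      Set.BijOn f {d | (encStack Unit bot s).labelAt d ≠ none}
        {m | Milestone bot s m} ∧
      (∀ d ∈ {d : List Bool | (encStack Unit bot s).labelAt d ≠ none},
        ∀ e ∈ {d : List Bool | (encStack Unit bot s).labelAt d ≠ none},
          (lexLe d e ↔ ll bot (f d) (f e))) := by
  obtain ⟨henc, hbij, hord⟩ := leftStack_order_isomorphism_general Unit hs.ne_nil hs.isBlockline
  exact ⟨_, fun d hd => ⟨hs.milestone (hbij.mapsTo hd), henc d hd⟩, hbij, hord⟩

end CPG
end
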